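/- arXiv:2411.02918 — 2 statements merged into one kernel-verified Lean document; each statement's English description precedes it below -/
import Mathlib

section
/- Let G be a unicyclic graph of order n with n ≥ 3. Then the number φ(G) of maximal dissociation sets of G satisfies φ(G) ≥ ⌊n/2⌋ + 2. -/
open SimpleGraph

/-- A dissociation set: a set of vertices inducing a subgraph of maximum degree at most 1,
i.e., every vertex of `S` has at most one neighbour inside `S`. -/
def IsDissoc {V : Type*} (G : SimpleGraph V) (S : Set V) : Prop :=
  ∀ v ∈ S, {u | u ∈ S ∧ G.Adj v u}.Subsingleton

/-- A maximal dissociation set: a dissociation set not properly contained in another one. -/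
def IsMaxDissoc {V : Type*} (G : SimpleGraph V) (S : Set V) : Prop :=
  IsDissoc G S ∧ ∀ T : Set V, IsDissoc G T → S ⊆ T → S = T

/-- `phi G` is the number of maximal dissociation sets of `G`. -/
noncomputable def phi {V : Type*} (G : SimpleGraph V) : ℕ :=
  {S : Set V | IsMaxDissoc G S}.ncard

/-- The number of maximal dissociation sets of `G` not containing `u`. -/
noncomputable def phiNot {V : Type*} (G : SimpleGraph V) (u : V) : ℕ :=
  {S : Set V | IsMaxDissoc G S ∧ u ∉ S}.ncard

/-- The number of maximal dissociation sets `S` of `G` with `u ∈ S` and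
`u` of degree 0 in the subgraph induced by `S`. -/
noncomputable def phi0 {V : Type*} (G : SimpleGraph V) (u : V) : ℕ :=
  {S : Set V | IsMaxDissoc G S ∧ u ∈ S ∧ ∀ x ∈ S, ¬ G.Adj u x}.ncard

/-- The number of maximal dissociation sets `S` of `G` with `u ∈ S` and
`u` of degree 1 in the subgraph induced by `S`. -/
noncomputable def phi1 {V : Type*} (G : SimpleGraph V) (u : V) : ℕ :=
  {S : Set V | IsMaxDissoc G S ∧ u ∈ S ∧ ∃! x, x ∈ S ∧ G.Adj u x}.ncard

/-- A unicyclic graph: a connected graph whose number of edges equals its number of vertices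
(equivalently, a connected graph with exactly one cycle). -/
def IsUnicyclic {V : Type*} [Fintype V] (G : SimpleGraph V) : Prop :=
  G.Connected ∧ G.edgeSet.ncard = Fintype.card V

/-- The tree `T(p,q)` (for `q ≤ p`): obtained from the star `K_{1,p}` by subdividing
exactly `q` of its edges.  The centre is `Sum.inl ()`, the `p` neighbours of the centre are
`Sum.inr (Sum.inl i)`, and for `j < q` the vertex `Sum.inr (Sum.inr j)` is the subdivision
pendant attached to the `j`-th neighbour.  It has `1 + p + q` vertices. -/
def treeT (p q : ℕ) (h : q ≤ p) : SimpleGraph (Unit ⊕ Fin p ⊕ Fin q) :=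
  SimpleGraph.fromRel fun a b =>
    (∃ i : Fin p, a = Sum.inl () ∧ b = Sum.inr (Sum.inl i)) ∨
    (∃ j : Fin q, a = Sum.inr (Sum.inl (Fin.castLE h j)) ∧ b = Sum.inr (Sum.inr j))

/-- The unicyclic graph `U(p,q)` (for `q ≤ p`): obtained by identifying one vertex of the
triangle `K₃` with the centre of `T(p,q)`.  The centre is `Sum.inl ()`, the two other triangle
vertices are `Sum.inr (Sum.inl 0)` and `Sum.inr (Sum.inl 1)`, and the copy of `T(p,q)` sits on
the remaining vertices.  It has `3 + p + q` vertices. -/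
def graphU (p q : ℕ) (h : q ≤ p) : SimpleGraph (Unit ⊕ Fin 2 ⊕ Fin p ⊕ Fin q) :=
  SimpleGraph.fromRel fun a b =>
    (a = Sum.inl () ∧ b = Sum.inr (Sum.inl 0)) ∨
    (a = Sum.inl () ∧ b = Sum.inr (Sum.inl 1)) ∨
    (a = Sum.inr (Sum.inl 0) ∧ b = Sum.inr (Sum.inl 1)) ∨
    (∃ i : Fin p, a = Sum.inl () ∧ b = Sum.inr (Sum.inr (Sum.inl i))) ∨
    (∃ j : Fin q, a = Sum.inr (Sum.inr (Sum.inl (Fin.castLE h j))) ∧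
      b = Sum.inr (Sum.inr (Sum.inr j)))

/-- The unicyclic graph obtained from the cycle `C_r` by attaching one pendant vertex
`Sum.inr j` to the cycle vertex `Sum.inl (f j)` for each `j : Fin t`.  For injective `f`
this is a member of the class `𝒰_{r,t}`. -/
def graphUrtF (r t : ℕ) (f : Fin t → Fin r) : SimpleGraph (Fin r ⊕ Fin t) :=
  SimpleGraph.fromRel fun a b =>
    (∃ i j : Fin r, a = Sum.inl i ∧ b = Sum.inl j ∧ (cycleGraph r).Adj i j) ∨
    (∃ j : Fin t, a = Sum.inl (f j) ∧ b = Sum.inr j)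

/-- The canonical member `U_{r,t}` of `𝒰_{r,t}` (for `t ≤ r`): the cycle `C_r` with one
pendant vertex attached to each of its first `t` vertices. -/
def graphUrt (r t : ℕ) (h : t ≤ r) : SimpleGraph (Fin r ⊕ Fin t) :=
  graphUrtF r t (Fin.castLE h)

/-- A caterpillar: a tree in which deleting all vertices of degree 1 leaves a path. -/
def IsCaterpillar {V : Type*} [Fintype V] (G : SimpleGraph V) : Prop :=
  G.IsTree ∧ ∃ m : ℕ,
    Nonempty ((G.induce {v | 2 ≤ (G.neighborSet v).ncard}) ≃g SimpleGraph.pathGraph m)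

/-- The graph `G₁` obtained from `U` by adding `k` new pendant vertices
`v₁ = Sum.inr 0, …, v_k = Sum.inr (k-1)`, each adjacent to `w`. -/
def addPendants {V : Type*} (U : SimpleGraph V) (w : V) (k : ℕ) : SimpleGraph (V ⊕ Fin k) :=
  SimpleGraph.fromRel fun a b =>
    (∃ x y, a = Sum.inl x ∧ b = Sum.inl y ∧ U.Adj x y) ∨
    (∃ j : Fin k, a = Sum.inl w ∧ b = Sum.inr j)

/-- The graph `G₂ = G₁ - w v_k + v₁ v_k`: obtained from `U` by attaching the pendant vertices
`v₁, …, v_{k-1}` to `w` and the vertex `v_k` to `v₁`. -/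
def swapPendant {V : Type*} (U : SimpleGraph V) (w : V) (k : ℕ) : SimpleGraph (V ⊕ Fin k) :=
  SimpleGraph.fromRel fun a b =>
    (∃ x y, a = Sum.inl x ∧ b = Sum.inl y ∧ U.Adj x y) ∨
    (∃ j : Fin k, j.val < k - 1 ∧ a = Sum.inl w ∧ b = Sum.inr j) ∨
    (∃ j₀ j₁ : Fin k, j₀.val = 0 ∧ j₁.val = k - 1 ∧ a = Sum.inr j₀ ∧ b = Sum.inr j₁)

/-- The graph obtained from `H` by attaching a pendant path of length 2 at `w`:
two new vertices `v = Sum.inr 0` and `u = Sum.inr 1` with edges `w v` and `v u`. -/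
def addPath2 {V : Type*} (H : SimpleGraph V) (w : V) : SimpleGraph (V ⊕ Fin 2) :=
  SimpleGraph.fromRel fun a b =>
    (∃ x y, a = Sum.inl x ∧ b = Sum.inl y ∧ H.Adj x y) ∨
    (a = Sum.inl w ∧ b = Sum.inr 0) ∨
    (a = Sum.inr 0 ∧ b = Sum.inr 1)

theorem isDissoc_coe_iff {V : Type*} {G : SimpleGraph V} {A : Finset V} :
    IsDissoc G (A : Set V) ↔
      ∀ v ∈ A, ∀ x ∈ A, ∀ y ∈ A, G.Adj v x → G.Adj v y → x = y :=
  ⟨fun h v hv _ hx _ hy hvx hvy => h v hv ⟨hx, hvx⟩ ⟨hy, hvy⟩,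
    fun h v hv _ hx _ hy => h v hv _ hx.1 _ hy.1 hx.2 hy.2⟩

instance {V : Type*} [DecidableEq V] (G : SimpleGraph V) [DecidableRel G.Adj] (A : Finset V) :
    Decidable (IsDissoc G (A : Set V)) :=
  decidable_of_iff _ isDissoc_coe_iff.symm

/-- A family of dissociation sets of `R`, no two of which lie in a common dissociation set. -/
def IsIncompatibleFamily {ι : Type*} [DecidableEq ι] (R : SimpleGraph ι)
    (L : Finset (Finset ι)) : Prop :=
  (∀ A ∈ L, IsDissoc R (A : Set ι)) ∧
    ∀ A ∈ L, ∀ B ∈ L, A ≠ B → ¬ IsDissoc R ((A ∪ B : Finset ι) : Set ι)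

instance {ι : Type*} [DecidableEq ι] (R : SimpleGraph ι) [DecidableRel R.Adj]
    (L : Finset (Finset ι)) : Decidable (IsIncompatibleFamily R L) :=
  inferInstanceAs (Decidable (_ ∧ _))

/-- The path on the vertices `0, …, k - 1`. -/
def finPath (k : ℕ) : SimpleGraph (Fin k) where
  Adj i j := i.val + 1 = j.val ∨ j.val + 1 = i.val
  symm := ⟨fun _ _ h => h.symm⟩
  loopless := ⟨fun _ h => by omega⟩

instance (k : ℕ) : DecidableRel (finPath k).Adj :=
  fun i j => inferInstanceAs (Decidable (i.val + 1 = j.val ∨ j.val + 1 = i.val))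

theorem exists_isIncompatibleFamily_cycleGraph_three :
    ∃ L, L.card = 3 ∧ IsIncompatibleFamily (cycleGraph 3) L :=
  ⟨{{0, 1}, {1, 2}, {0, 2}}, by decide, by decide⟩

theorem exists_isIncompatibleFamily_cycleGraph_four :
    ∃ L, L.card = 4 ∧ IsIncompatibleFamily (cycleGraph 4) L :=
  ⟨{{0, 1}, {1, 2}, {2, 3}, {0, 3}}, by decide, by decide⟩

theorem exists_isIncompatibleFamily_cycleGraph_five :
    ∃ L, L.card = 5 ∧ IsIncompatibleFamily (cycleGraph 5) L :=
  ⟨{{0, 1}, {1, 2}, {2, 3}, {3, 4}, {0, 4}}, by decide, by decide⟩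

theorem exists_isIncompatibleFamily_cycleGraph_six :
    ∃ L, L.card = 5 ∧ IsIncompatibleFamily (cycleGraph 6) L :=
  ⟨{{0, 1, 3, 4}, {1, 2, 4, 5}, {0, 2, 3, 5}, {0, 2, 4}, {1, 3, 5}}, by decide,
    by decide⟩

theorem exists_isIncompatibleFamily_finPath_three :
    ∃ L, L.card = 3 ∧ IsIncompatibleFamily (finPath 3) L :=
  ⟨{{0, 1}, {1, 2}, {0, 2}}, by decide, by decide⟩

theorem exists_isIncompatibleFamily_finPath_six :
    ∃ L, L.card = 5 ∧ IsIncompatibleFamily (finPath 6) L :=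
  ⟨{{0, 1, 3, 4}, {0, 1, 4, 5}, {1, 2, 4, 5}, {0, 2, 3, 5}, {0, 1, 3, 5}}, by decide,
    by decide⟩

section DissociationInduction

open Finset Classical

variable {V : Type*} [Fintype V] (G : SimpleGraph V)

theorem IsDissoc.subset {V : Type*} {G : SimpleGraph V} {A B : Set V} (hB : IsDissoc G B)
    (h : A ⊆ B) : IsDissoc G A :=
  fun v hv _ hx _ hy => hB v (h hv) ⟨h hx.1, hx.2⟩ ⟨h hy.1, hy.2⟩

/-- The maximal dissociation sets of the subgraph induced by `S`. -/
noncomputable def maxDissoc (S : Finset V) : Finset (Finset V) :=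
  univ.filter fun T => Maximal (fun A : Finset V => A ⊆ S ∧ IsDissoc G (A : Set V)) T

/-- The neighbours of `v` inside `S`. -/
noncomputable def nbrIn (S : Finset V) (v : V) : Finset V :=
  S.filter (G.Adj v)

/-- The sum of the degrees of the subgraph induced by `S`. -/
noncomputable def degSum (S : Finset V) : ℕ :=
  ∑ v ∈ S, #(nbrIn G S v)

variable {G}

omit [Fintype V] in
theorem mem_nbrIn {S : Finset V} {v w : V} : w ∈ nbrIn G S v ↔ w ∈ S ∧ G.Adj v w := by
  simp [nbrIn]

theorem mem_maxDissoc {S T : Finset V} :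
    T ∈ maxDissoc G S ↔ Maximal (fun A : Finset V => A ⊆ S ∧ IsDissoc G (A : Set V)) T := by
  simp [maxDissoc]

theorem exists_maxDissoc {S A : Finset V} (hAS : A ⊆ S) (hA : IsDissoc G (A : Set V)) :
    ∃ T ∈ maxDissoc G S, A ⊆ T := by
  obtain ⟨T, hAT, hT⟩ := Finite.exists_le_maximal
    (p := fun A : Finset V => A ⊆ S ∧ IsDissoc G (A : Set V)) ⟨hAS, hA⟩
  exact ⟨T, mem_maxDissoc.2 hT, hAT⟩

theorem isDissoc_empty {V : Type*} {G : SimpleGraph V} :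
    IsDissoc G ((∅ : Finset V) : Set V) := by
  simp [IsDissoc]

theorem card_maxDissoc_pos (S : Finset V) : 0 < #(maxDissoc G S) := by
  obtain ⟨T, hT, -⟩ := exists_maxDissoc (G := G) (empty_subset S) isDissoc_empty
  exact card_pos.2 ⟨T, hT⟩

/-- A maximal dissociation set of an induced subgraph is recovered from any extension. -/
theorem inter_eq_of_subset {S H R T : Finset V} (hHS : R ∈ maxDissoc G H)
    (hT : T ∈ maxDissoc G S) (hRT : R ⊆ T) : T ∩ H = R := by
  have hR := mem_maxDissoc.1 hHS
  have hT := mem_maxDissoc.1 hT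
  refine (hR.eq_of_le ⟨inter_subset_right, hT.prop.2.subset ?_⟩
    (subset_inter hRT hR.prop.1)).symm
  simp

theorem card_mul_maxDissoc_le {ι : Type*} (I : Finset ι) (A : ι → Finset V) {S W : Finset V}
    (hWS : W ⊆ S) (hAW : ∀ i ∈ I, A i ⊆ W) (hA : ∀ i ∈ I, IsDissoc G (A i : Set V))
    (hout : ∀ i ∈ I, ∀ a ∈ A i, ∀ b ∈ S \ W, ¬ G.Adj a b)
    (hpair : ∀ i ∈ I, ∀ j ∈ I, i ≠ j → ¬ IsDissoc G ((A i ∪ A j : Finset V) : Set V)) :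
    #I * #(maxDissoc G (S \ W)) ≤ #(maxDissoc G S) := by
  have hext : ∀ p : ι × Finset V, ∃ T : Finset V, p ∈ I ×ˢ maxDissoc G (S \ W) →
      T ∈ maxDissoc G S ∧ A p.1 ∪ p.2 ⊆ T := by
    rintro ⟨i, R⟩
    by_cases hp : (i, R) ∈ I ×ˢ maxDissoc G (S \ W)
    · obtain ⟨hi, hR⟩ := mem_product.1 hp
      have hR' := (mem_maxDissoc.1 hR).prop
      obtain ⟨T, hT, hsub⟩ := exists_maxDissoc (G := G) (S := S) (A := A i ∪ R)
        (union_subset ((hAW i hi).trans hWS) (hR'.1.trans sdiff_subset)) (by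
          have h1 := isDissoc_coe_iff.1 (hA i hi)
          have h2 := isDissoc_coe_iff.1 hR'.2
          have h3 : ∀ a ∈ A i, ∀ b ∈ R, ¬ G.Adj a b :=
            fun a ha b hb => hout i hi a ha b (hR'.1 hb)
          rw [isDissoc_coe_iff]
          intro v hv x hx y hy hvx hvy
          rw [mem_union] at hv hx hy
          have h4 := hvx.symm
          have h5 := hvy.symm
          grind)
      exact ⟨T, fun _ => ⟨hT, hsub⟩⟩
    · exact ⟨∅, fun h => absurd h hp⟩
  choose E hE using hext
  rw [← card_product]
  refine card_le_card_of_injOn E (fun p hp => (hE p hp).1) ?_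
  rintro ⟨i, R⟩ hp ⟨j, R'⟩ hq hEq
  obtain ⟨hT, h1⟩ := hE _ hp
  obtain ⟨hT', h2⟩ := hE _ hq
  obtain ⟨hi, hR⟩ := mem_product.1 hp
  obtain ⟨hj, hR'⟩ := mem_product.1 hq
  dsimp only at hi hR hj hR' h1 h2
  have hRR : R = R' := by
    rw [← inter_eq_of_subset hR hT (subset_union_right.trans h1),
      ← inter_eq_of_subset hR' hT' (subset_union_right.trans h2), hEq]
  have hij : i = j := by
    by_contra hne
    refine hpair i hi j hj hne ((mem_maxDissoc.1 hT).prop.2.subset ?_)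
    rw [coe_subset]
    exact union_subset (subset_union_left.trans h1) (hEq ▸ subset_union_left.trans h2)
  rw [hRR, hij]

theorem card_maxDissoc_mono {S H : Finset V} (h : H ⊆ S) :
    #(maxDissoc G H) ≤ #(maxDissoc G S) := by
  have := card_mul_maxDissoc_le (G := G) ({()} : Finset Unit) (fun _ => ∅) (S := S) (W := S \ H)
    sdiff_subset (by simp) (fun _ _ => isDissoc_empty) (by simp) (by simp)
  simpa [Finset.sdiff_sdiff_eq_self h] using this

theorem isDissoc_pair {V : Type*} {G : SimpleGraph V} (u x : V) :
    IsDissoc G (({u, x} : Finset V) : Set V) := by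
  rw [isDissoc_coe_iff]
  intro v hv a ha b hb hva hvb
  have h1 := hva.ne
  have h2 := hvb.ne
  grind

/-- Each edge at `u` lies in a maximal dissociation set, in which it is the only edge at `u`. -/
theorem exists_edge_extension {S : Finset V} {u : V} (hu : u ∈ S) :
    ∃ F : V → Finset V, (∀ x ∈ nbrIn G S u, F x ∈ maxDissoc G S ∧ u ∈ F x ∧ x ∈ F x ∧
      ∀ y ∈ F x, G.Adj u y → y = x) ∧ Set.InjOn F (nbrIn G S u) := by
  have hext : ∀ x, ∃ T : Finset V, x ∈ nbrIn G S u → T ∈ maxDissoc G S ∧ u ∈ T ∧ x ∈ T ∧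
      ∀ y ∈ T, G.Adj u y → y = x := by
    intro x
    by_cases hx : x ∈ nbrIn G S u
    · obtain ⟨hxS, hux⟩ := mem_nbrIn.1 hx
      obtain ⟨T, hT, hsub⟩ := exists_maxDissoc (G := G) (S := S) (A := {u, x})
        (by simp [insert_subset_iff, hu, hxS]) (isDissoc_pair u x)
      have h1 : u ∈ T := hsub (by simp)
      have h2 : x ∈ T := hsub (by simp)
      exact ⟨T, fun _ => ⟨hT, h1, h2, fun y hy huy =>
        isDissoc_coe_iff.1 (mem_maxDissoc.1 hT).prop.2 u h1 y hy x h2 huy hux⟩⟩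
    · exact ⟨∅, fun h => absurd h hx⟩
  choose F hF using hext
  refine ⟨F, hF, fun x hx y hy hxy => ?_⟩
  exact (hF y hy).2.2.2 x (hxy ▸ (hF x hx).2.2.1) (mem_nbrIn.1 hx).2

theorem card_nbrIn_lt_card_maxDissoc {S : Finset V} {u : V} (hu : u ∈ S)
    (hd : 2 ≤ #(nbrIn G S u)) : #(nbrIn G S u) + 1 ≤ #(maxDissoc G S) := by
  obtain ⟨F, hF, hinj⟩ := exists_edge_extension (G := G) hu
  obtain ⟨x, hx, y, hy, hxy⟩ := one_lt_card.1 hd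
  obtain ⟨hxS, hux⟩ := mem_nbrIn.1 hx
  obtain ⟨hyS, huy⟩ := mem_nbrIn.1 hy
  obtain ⟨T, hT, hsub⟩ := exists_maxDissoc (G := G) (S := S) (A := {x, y})
    (by simp [insert_subset_iff, hxS, hyS]) (isDissoc_pair x y)
  have huT : u ∉ T := fun h => hxy
    (isDissoc_coe_iff.1 (mem_maxDissoc.1 hT).prop.2 u h x (hsub (by simp)) y
      (hsub (by simp)) hux huy)
  have hTF : T ∉ (nbrIn G S u).image F := by
    intro h
    obtain ⟨z, hz, rfl⟩ := mem_image.1 h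
    exact huT (hF z hz).2.1
  rw [← card_image_of_injOn hinj, ← card_insert_of_notMem hTF]
  refine card_le_card (insert_subset hT fun T' h => ?_)
  obtain ⟨z, hz, rfl⟩ := mem_image.1 h
  exact (hF z hz).1

theorem card_maxDissoc_leaf {S : Finset V} {u v : V} (hu : u ∈ S) (hv : v ∈ S)
    (hleaf : nbrIn G S v = {u}) :
    #(maxDissoc G ((S.erase v).erase u)) + #(nbrIn G S u) ≤ #(maxDissoc G S) + 1 := by
  obtain ⟨F, hF, hinj⟩ := exists_edge_extension (G := G) hu
  have hvu : G.Adj v u := (mem_nbrIn.1 (hleaf ▸ mem_singleton_self u)).2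
  have hvN : v ∈ nbrIn G S u := mem_nbrIn.2 ⟨hv, hvu.symm⟩
  have hext : ∀ R, ∃ T : Finset V, R ∈ maxDissoc G ((S.erase v).erase u) →
      T ∈ maxDissoc G S ∧ v ∈ T ∧ R ⊆ T := by
    intro R
    by_cases hR : R ∈ maxDissoc G ((S.erase v).erase u)
    · have hR' := (mem_maxDissoc.1 hR).prop
      obtain ⟨T, hT, hsub⟩ := exists_maxDissoc (G := G) (S := S) (A := insert v R)
        (insert_subset hv (hR'.1.trans ((erase_subset _ _).trans (erase_subset _ _)))) (by
          have h1 := isDissoc_coe_iff.1 hR'.2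
          have h2 : ∀ b ∈ R, ¬ G.Adj v b := fun b hb h => by
            have h3 := hR'.1 hb
            have h4 : b ∈ nbrIn G S v := mem_nbrIn.2 ⟨by grind, h⟩
            grind
          rw [isDissoc_coe_iff]
          intro w hw x hx y hy hwx hwy
          have h4 := hwx.symm
          have h5 := hwy.symm
          have h6 := hwx.ne
          have h7 := hwy.ne
          grind)
      exact ⟨T, fun _ => ⟨hT, hsub (by simp), (subset_insert _ _).trans hsub⟩⟩
    · exact ⟨∅, fun h => absurd h hR⟩
  choose E hE using hext
  have hEinj : Set.InjOn E (maxDissoc G ((S.erase v).erase u)) := by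
    intro R hR R' hR' h
    rw [← inter_eq_of_subset hR (hE R hR).1 (hE R hR).2.2,
      ← inter_eq_of_subset hR' (hE R' hR').1 (hE R' hR').2.2, h]
  have hdisj : Disjoint ((maxDissoc G ((S.erase v).erase u)).image E)
      (((nbrIn G S u).erase v).image F) := by
    rw [Finset.disjoint_left]
    intro T h1 h2
    obtain ⟨R, hR, rfl⟩ := mem_image.1 h1
    obtain ⟨x, hx, hxE⟩ := mem_image.1 h2
    have hxN := mem_of_mem_erase hx
    exact ne_of_mem_erase hx ((hF x hxN).2.2.2 v (hxE ▸ (hE R hR).2.1) hvu.symm).symm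
  have hcard : #(maxDissoc G ((S.erase v).erase u)) + #((nbrIn G S u).erase v) ≤
      #(maxDissoc G S) := by
    rw [← card_image_of_injOn hEinj,
      ← card_image_of_injOn (hinj.mono (by simp)),
      ← card_union_of_disjoint hdisj]
    refine card_le_card fun T hT => ?_
    rcases mem_union.1 hT with h | h
    · obtain ⟨R, hR, rfl⟩ := mem_image.1 h
      exact (hE R hR).1
    · obtain ⟨x, hx, rfl⟩ := mem_image.1 h
      exact (hF x (mem_of_mem_erase hx)).1
  rw [card_erase_of_mem hvN] at hcard
  omega

omit [Fintype V] in
theorem nbrIn_erase (S : Finset V) (v w : V) :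
    nbrIn G (S.erase v) w = (nbrIn G S w).erase v := by
  ext; simp [mem_nbrIn, and_assoc]

omit [Fintype V] in
theorem degSum_erase {S : Finset V} {v : V} (hv : v ∈ S) :
    degSum G S = degSum G (S.erase v) + 2 * #(nbrIn G S v) := by
  have h1 : ∀ w ∈ S.erase v,
      #(nbrIn G S w) = #(nbrIn G (S.erase v) w) + if G.Adj v w then 1 else 0 := by
    intro w hw
    rw [nbrIn_erase]
    split_ifs with h
    · exact (card_erase_add_one (mem_nbrIn.2 ⟨hv, h.symm⟩)).symm
    · rw [erase_eq_of_notMem fun h' => h (mem_nbrIn.1 h').2.symm, add_zero]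
  have h2 : nbrIn G S v = (S.erase v).filter (G.Adj v) := by
    ext w
    simp only [mem_nbrIn, mem_filter, mem_erase]
    exact ⟨fun h => ⟨⟨h.2.ne.symm, h.1⟩, h.2⟩, fun h => ⟨h.1.2, h.2⟩⟩
  rw [degSum, ← add_sum_erase S _ hv, sum_congr rfl h1, sum_add_distrib, ← card_filter, ← h2,
    degSum]
  omega

theorem isDissoc_image_iff {ι V : Type*} {R : SimpleGraph ι} {G : SimpleGraph V} {f : ι → V}
    (hf : Function.Injective f) (hR : ∀ i j, R.Adj i j ↔ G.Adj (f i) (f j)) {A : Finset ι} :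
    IsDissoc G (A.image f : Set V) ↔ IsDissoc R (A : Set ι) := by
  rw [isDissoc_coe_iff, isDissoc_coe_iff]
  simp only [forall_mem_image, ← hR, hf.eq_iff]

/-- Transfer of a family of pairwise incompatible dissociation sets along an embedding of a
small graph `R`. -/
theorem card_mul_maxDissoc_le_of_embedding {ι : Type*} [DecidableEq ι] {R : SimpleGraph ι}
    (f : ι → V) (hf : Function.Injective f) (hR : ∀ i j, R.Adj i j ↔ G.Adj (f i) (f j))
    (L : Finset (Finset ι)) {S W : Finset V} (hWS : W ⊆ S) (hfW : ∀ i, f i ∈ W)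
    (hL : IsIncompatibleFamily R L)
    (hout : ∀ i, ∀ b ∈ S \ W, ¬ G.Adj (f i) b) :
    #L * #(maxDissoc G (S \ W)) ≤ #(maxDissoc G S) := by
  refine card_mul_maxDissoc_le L (fun A => A.image f) hWS ?_ ?_ ?_ ?_
  · intro A _ x hx
    obtain ⟨i, -, rfl⟩ := mem_image.1 hx
    exact hfW i
  · exact fun A hA => (isDissoc_image_iff hf hR).2 (hL.1 A hA)
  · intro A _ a ha b hb
    obtain ⟨i, -, rfl⟩ := mem_image.1 ha
    exact hout i b hb
  · intro A hA B hB hne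
    rw [← image_union, isDissoc_image_iff hf hR]
    exact hL.2 A hA B hB hne

theorem card_mul_maxDissoc_le_of_fin_embedding {k : ℕ} {R : SimpleGraph (Fin k)} (f : Fin k → V)
    (hR : ∀ i j, i < j → f i ≠ f j ∧ (R.Adj i j ↔ G.Adj (f i) (f j)))
    {L : Finset (Finset (Fin k))} (hL : IsIncompatibleFamily R L) {S W : Finset V} (hWS : W ⊆ S)
    (hfW : ∀ i, f i ∈ W) (hout : ∀ i, ∀ b ∈ S \ W, ¬ G.Adj (f i) b) :
    #L * #(maxDissoc G (S \ W)) ≤ #(maxDissoc G S) := by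
  refine card_mul_maxDissoc_le_of_embedding f (fun i j hij => ?_) (fun i j => ?_) L hWS hfW hL hout
  · by_contra hne
    rcases lt_or_gt_of_ne hne with h | h
    · exact (hR i j h).1 hij
    · exact (hR j i h).1 hij.symm
  · rcases lt_trichotomy i j with h | rfl | h
    · exact (hR i j h).2
    · exact iff_of_false R.irrefl G.irrefl
    · rw [R.adj_comm, G.adj_comm]
      exact (hR j i h).2

theorem five_le_card_maxDissoc_of_cycle_five {S : Finset V} {a b c d e : V}
    (hS : {a, b, c, d, e} ⊆ S) (hnd : [a, b, c, d, e].Nodup)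
    (hab : G.Adj a b) (hbc : G.Adj b c) (hcd : G.Adj c d) (hde : G.Adj d e) (hae : G.Adj a e)
    (hac : ¬ G.Adj a c) (had : ¬ G.Adj a d) (hbd : ¬ G.Adj b d) (hbe : ¬ G.Adj b e)
    (hce : ¬ G.Adj c e) : 5 ≤ #(maxDissoc G S) := by
  obtain ⟨L, hLc, hL⟩ := exists_isIncompatibleFamily_cycleGraph_five
  simp only [insert_subset_iff, singleton_subset_iff] at hS
  simp only [List.nodup_cons, List.mem_cons, not_or] at hnd
  have h := card_mul_maxDissoc_le_of_fin_embedding (G := G) (S := S) ![a, b, c, d, e]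
    (by
      intro i j hij
      fin_cases i <;> fin_cases j <;>
        first
        | exact absurd hij (by decide)
        | exact ⟨by simp [hnd], iff_of_true (by decide) (by assumption)⟩
        | exact ⟨by simp [hnd], iff_of_false (by decide) (by assumption)⟩)
    hL subset_rfl (by intro i; fin_cases i <;> simp [hS]) (by simp)
  rw [hLc] at h
  have := card_maxDissoc_pos (G := G) (S \ S)
  omega

theorem five_le_card_maxDissoc_of_path_six {S : Finset V} {a b c d e f : V}
    (hS : {a, b, c, d, e, f} ⊆ S) (hnd : [a, b, c, d, e, f].Nodup)
    (hab : G.Adj a b) (hbc : G.Adj b c) (hcd : G.Adj c d) (hde : G.Adj d e) (hef : G.Adj e f)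
    (hac : ¬ G.Adj a c) (had : ¬ G.Adj a d) (hae : ¬ G.Adj a e) (hbd : ¬ G.Adj b d)
    (hbe : ¬ G.Adj b e) (hbf : ¬ G.Adj b f) (hce : ¬ G.Adj c e) (hcf : ¬ G.Adj c f)
    (hdf : ¬ G.Adj d f) : 5 ≤ #(maxDissoc G S) := by
  have hpos := card_maxDissoc_pos (G := G) (S \ S)
  simp only [insert_subset_iff, singleton_subset_iff] at hS
  simp only [List.nodup_cons, List.mem_cons, not_or] at hnd
  by_cases haf : G.Adj a f
  · obtain ⟨L, hLc, hL⟩ := exists_isIncompatibleFamily_cycleGraph_six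
    have h := card_mul_maxDissoc_le_of_fin_embedding (G := G) (S := S) ![a, b, c, d, e, f]
      (by
        intro i j hij
        fin_cases i <;> fin_cases j <;>
          first
          | exact absurd hij (by decide)
          | exact ⟨by simp [hnd], iff_of_true (by decide) (by assumption)⟩
          | exact ⟨by simp [hnd], iff_of_false (by decide) (by assumption)⟩)
      hL subset_rfl (by intro i; fin_cases i <;> simp [hS]) (by simp)
    rw [hLc] at h
    omega
  · obtain ⟨L, hLc, hL⟩ := exists_isIncompatibleFamily_finPath_six
    have h := card_mul_maxDissoc_le_of_fin_embedding (G := G) (S := S) ![a, b, c, d, e, f]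
      (by
        intro i j hij
        fin_cases i <;> fin_cases j <;>
          first
          | exact absurd hij (by decide)
          | exact ⟨by simp [hnd], iff_of_true (by decide) (by assumption)⟩
          | exact ⟨by simp [hnd], iff_of_false (by decide) (by assumption)⟩)
      hL subset_rfl (by intro i; fin_cases i <;> simp [hS]) (by simp)
    rw [hLc] at h
    omega

omit [Fintype V] in
theorem degSum_sdiff_of_two_regular {S W : Finset V} (hreg : ∀ v ∈ S, #(nbrIn G S v) = 2)
    (hout : ∀ w ∈ W, ∀ x ∈ S \ W, ¬ G.Adj w x) : degSum G (S \ W) = #(S \ W) * 2 := by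
  refine sum_const_nat fun v hv => ?_
  rw [← hreg v (sdiff_subset hv)]
  congr 1
  ext x
  simp only [mem_nbrIn, mem_sdiff, and_congr_left_iff, and_iff_left_iff_imp]
  exact fun hvx _ hxW => hout x hxW v hv hvx.symm

omit [Fintype V] in
theorem exists_other_nbr {S : Finset V} (hreg : ∀ v ∈ S, #(nbrIn G S v) = 2) {a b : V}
    (ha : a ∈ S) (hb : b ∈ S) (hab : G.Adj a b) :
    ∃ c ∈ S, c ≠ b ∧ G.Adj a c ∧ ∀ x ∈ S, G.Adj a x → x = b ∨ x = c := by
  have hbN : b ∈ nbrIn G S a := mem_nbrIn.2 ⟨hb, hab⟩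
  obtain ⟨c, hc⟩ := card_eq_one.1
    (show #((nbrIn G S a).erase b) = 1 by rw [card_erase_of_mem hbN, hreg a ha])
  have hcN : c ∈ (nbrIn G S a).erase b := hc ▸ mem_singleton_self c
  obtain ⟨hcb, hcN⟩ := mem_erase.1 hcN
  refine ⟨c, (mem_nbrIn.1 hcN).1, hcb, (mem_nbrIn.1 hcN).2, fun x hx hax => ?_⟩
  by_contra! h
  exact h.2 (mem_singleton.1 (hc ▸ mem_erase.2 ⟨h.1, mem_nbrIn.2 ⟨hx, hax⟩⟩))

theorem le_card_maxDissoc_of_two_regular {S : Finset V} (hS : S.Nonempty)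
    (hreg : ∀ v ∈ S, #(nbrIn G S v) = 2)
    (ih : ∀ H ⊂ S, #H < degSum G H →
      degSum G H + 4 ≤ 2 * #(maxDissoc G H) + 2 * ((#H + 1) / 2)) :
    #S / 2 + 2 ≤ #(maxDissoc G S) := by
  have hm : degSum G S = #S * 2 := sum_const_nat hreg
  have hpos := fun H : Finset V => card_maxDissoc_pos (G := G) H
  obtain ⟨b, hb⟩ := hS
  obtain ⟨a, haN⟩ := card_pos.1 (show 0 < #(nbrIn G S b) by rw [hreg b hb]; norm_num)
  obtain ⟨ha, hba⟩ := mem_nbrIn.1 haN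
  obtain ⟨c, hc, hca, hbc, hbN⟩ := exists_other_nbr hreg hb ha hba
  have hab := hba.symm
  have hcb := hbc.symm
  have hac := hca.symm
  have hab' := hab.ne
  have hbc' := hbc.ne
  obtain ⟨e, he, heb, hae, haN⟩ := exists_other_nbr hreg ha hb hab
  obtain ⟨f, hf, hfb, hcf, hcN⟩ := exists_other_nbr hreg hc hb hcb
  have hea := hae.symm
  have hfc := hcf.symm
  have hae' := hae.ne
  have hcf' := hcf.ne
  by_cases hec : e = c
  · subst hec
    have hout : ∀ w ∈ ({a, b, e} : Finset V), ∀ x ∈ S \ {a, b, e}, ¬ G.Adj w x := by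
      grind
    have hW : ({a, b, e} : Finset V) ⊆ S := by simp [insert_subset_iff, *]
    have h1 := degSum_sdiff_of_two_regular hreg hout
    have h2 := card_sdiff_add_card_eq_card hW
    have h3 : #({a, b, e} : Finset V) = 3 := by
      rw [card_eq_three]
      exact ⟨a, b, e, by grind⟩
    obtain ⟨L, hLc, hL⟩ := exists_isIncompatibleFamily_cycleGraph_three
    have h4 := card_mul_maxDissoc_le_of_fin_embedding (G := G) ![a, b, e]
      (by
        intro i j hij
        fin_cases i <;> fin_cases j <;>
          first
          | exact absurd hij (by decide)
          | exact ⟨G.ne_of_adj (by assumption), iff_of_true (by decide) (by assumption)⟩)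
      hL hW (by intro i; fin_cases i <;> simp)
      (by intro i; fin_cases i <;> exact hout _ (by simp))
    rw [hLc] at h4
    have h5 := hpos (S \ {a, b, e})
    have h6 := ih (S \ {a, b, e}) (sdiff_ssubset hW (by simp))
    omega
  have hac' : ¬ G.Adj a c := fun h => by grind
  have hne : f ≠ a := fun h => hac' (h ▸ hfc)
  by_cases hef : e = f
  · subst hef
    obtain ⟨g, hg, hga, heg, heN⟩ := exists_other_nbr hreg he ha hea
    have hgc : g = c := by grind
    subst hgc
    have hout : ∀ w ∈ ({a, b, g, e} : Finset V), ∀ x ∈ S \ {a, b, g, e}, ¬ G.Adj w x := by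
      grind
    have hW : ({a, b, g, e} : Finset V) ⊆ S := by simp [insert_subset_iff, *]
    have h1 := degSum_sdiff_of_two_regular hreg hout
    have h2 := card_sdiff_add_card_eq_card hW
    have h3 : #({a, b, g, e} : Finset V) = 4 := by
      rw [card_eq_four]
      exact ⟨a, b, g, e, by grind⟩
    have hbe : ¬ G.Adj b e := fun h => by grind
    obtain ⟨L, hLc, hL⟩ := exists_isIncompatibleFamily_cycleGraph_four
    have h4 := card_mul_maxDissoc_le_of_fin_embedding (G := G) ![a, b, g, e]
      (by
        intro i j hij
        fin_cases i <;> fin_cases j <;>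
          first
          | exact absurd hij (by decide)
          | exact ⟨G.ne_of_adj (by assumption), iff_of_true (by decide) (by assumption)⟩
          | exact ⟨by simp [*, hfb.symm], iff_of_false (by decide) (by assumption)⟩)
      hL hW (by intro i; fin_cases i <;> simp)
      (by intro i; fin_cases i <;> exact hout _ (by simp))
    rw [hLc] at h4
    have h5 := hpos (S \ {a, b, g, e})
    have h6 := ih (S \ {a, b, g, e}) (sdiff_ssubset hW (by simp))
    omega
  by_cases hn : 8 ≤ #S
  · have hW : ({a, b, c, e, f} : Finset V) ⊆ S := by simp [insert_subset_iff, *]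
    have hout : ∀ w ∈ ({a, b, c} : Finset V), ∀ x ∈ S \ {a, b, c, e, f}, ¬ G.Adj w x := by
      grind
    have h1 : #({a, b, c, e, f} : Finset V) = 5 := by
      repeat rw [card_insert_of_notMem (by simp; grind)]
      simp
    have h2 := card_sdiff_add_card_eq_card hW
    have h3 : 2 * #S ≤ degSum G (S \ {a, b, c, e, f}) + 12 := by
      have hle : ∀ x ∈ S, ∀ y ∈ S, G.Adj x y → ∀ H ⊆ S, y ∉ H → #(nbrIn G H x) ≤ 1 := by
        intro x hx y hy hxy H hH hyH
        have hyN : y ∈ nbrIn G S x := mem_nbrIn.2 ⟨hy, hxy⟩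
        have hcard : #((nbrIn G S x).erase y) = 1 := by rw [card_erase_of_mem hyN, hreg x hx]
        refine (card_le_card fun z hz => ?_).trans hcard.le
        obtain ⟨hzH, hxz⟩ := mem_nbrIn.1 hz
        exact mem_erase.2 ⟨fun h => hyH (h ▸ hzH), mem_nbrIn.2 ⟨hH hzH, hxz⟩⟩
      have hsub : ∀ {H : Finset V} (x : V), H ⊆ S → H.erase x ⊆ S :=
        fun x h => (erase_subset x _).trans h
      have e1 := degSum_erase (G := G) he
      have e2 := degSum_erase (G := G) (S := S.erase e) (v := a) (by simp [*])
      have e3 := degSum_erase (G := G) (S := (S.erase e).erase a) (v := b)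
        (by simp [*, heb.symm, hab'.symm])
      have e4 := degSum_erase (G := G) (S := ((S.erase e).erase a).erase b) (v := c)
        (by simp [*, hbc'.symm, Ne.symm hec])
      have e5 := degSum_erase (G := G) (S := (((S.erase e).erase a).erase b).erase c) (v := f)
        (by simp [*, hcf'.symm, Ne.symm hef])
      have l2 := hle a ha e he hae (S.erase e) (erase_subset e S) (by simp)
      have l3 := hle b hb a ha hba ((S.erase e).erase a) (hsub a (erase_subset e S)) (by simp)
      have l4 := hle c hc b hb hcb (((S.erase e).erase a).erase b)
        (hsub b (hsub a (erase_subset e S))) (by simp)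
      have l5 := hle f hf c hc hfc ((((S.erase e).erase a).erase b).erase c)
        (hsub c (hsub b (hsub a (erase_subset e S)))) (by simp)
      have heq : ((((S.erase e).erase a).erase b).erase c).erase f = S \ {a, b, c, e, f} := by
        ext x
        simp only [mem_erase, mem_sdiff, mem_insert, mem_singleton]
        tauto
      rw [heq] at e5
      have := hreg e he
      omega
    obtain ⟨L, hLc, hL⟩ := exists_isIncompatibleFamily_finPath_three
    have h4 := card_mul_maxDissoc_le_of_fin_embedding (G := G) ![a, b, c]
      (by
        intro i j hij
        fin_cases i <;> fin_cases j <;>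
          first
          | exact absurd hij (by decide)
          | exact ⟨G.ne_of_adj (by assumption), iff_of_true (by decide) (by assumption)⟩
          | exact ⟨by simp [*], iff_of_false (by decide) (by assumption)⟩)
      hL hW (by intro i; fin_cases i <;> simp)
      (by intro i; fin_cases i <;> exact hout _ (by simp))
    rw [hLc] at h4
    have h6 := ih (S \ {a, b, c, e, f}) (sdiff_ssubset hW (by simp))
    omega
  suffices 5 ≤ #(maxDissoc G S) by omega
  obtain ⟨g, hg, hgc, hfg, hfN⟩ := exists_other_nbr hreg hf hc hfc
  have hga : g ≠ a := by
    rintro rfl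
    exact (haN f hf hfg.symm).elim hfb (Ne.symm hef)
  have hgb : g ≠ b := by
    rintro rfl
    exact (hbN f hf hfg.symm).elim hne hcf'.symm
  have hfg' := hfg.ne
  clear hreg ih hm hpos
  by_cases hge : g = e
  · subst hge
    exact five_le_card_maxDissoc_of_cycle_five (a := a) (b := b) (c := c) (d := f) (e := g)
      (by simp [insert_subset_iff, *]) (by simp; grind) hab hbc hcf hfg hae hac'
      (by grind) (by grind) (by grind) (by grind)
  · have hef' : ¬ G.Adj e f := fun h => by grind [h.symm]
    exact five_le_card_maxDissoc_of_path_six (a := e) (b := a) (c := b) (d := c) (e := f) (f := g)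
      (by simp [insert_subset_iff, *]) (by simp; grind) hea hab hbc hcf hfg
      (fun h => by grind [h.symm]) (fun h => by grind [h.symm]) hef' hac'
      (by grind) (by grind) (by grind) (by grind) (by grind)

theorem degSum_add_four_le (hG : ∀ S : Finset V, degSum G S ≤ 2 * #S) (S : Finset V) :
    #S < degSum G S → degSum G S + 4 ≤ 2 * #(maxDissoc G S) + 2 * ((#S + 1) / 2) := by
  induction S using Finset.strongInduction with
  | H S ih =>
    intro hS
    by_cases h0 : ∃ v ∈ S, #(nbrIn G S v) = 0
    · obtain ⟨v, hv, hd⟩ := h0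
      have h1 := degSum_erase (G := G) hv
      have h2 := card_erase_add_one hv
      have h3 := card_maxDissoc_mono (G := G) (erase_subset v S)
      have h4 := ih _ (erase_ssubset hv) (by omega)
      omega
    by_cases h1 : ∃ v ∈ S, #(nbrIn G S v) = 1
    · obtain ⟨v, hv, hd⟩ := h1
      obtain ⟨u, hleaf⟩ := card_eq_one.1 hd
      obtain ⟨hu, hvu⟩ := mem_nbrIn.1 (hleaf ▸ mem_singleton_self u)
      have huv : u ∈ S.erase v := mem_erase.2 ⟨hvu.ne.symm, hu⟩
      have hvN : v ∈ nbrIn G S u := mem_nbrIn.2 ⟨hv, hvu.symm⟩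
      have h1 := degSum_erase (G := G) hv
      have h2 := degSum_erase (G := G) huv
      rw [nbrIn_erase, card_erase_of_mem hvN] at h2
      have h3 := card_pos.2 ⟨v, hvN⟩
      have h4 := card_erase_add_one hv
      have h5 := card_erase_add_one huv
      have h6 := card_maxDissoc_leaf hu hv hleaf
      have h7 := card_nbrIn_lt_card_maxDissoc (G := G) hu
      have h8 := ih ((S.erase v).erase u)
        ((erase_subset _ _).trans_ssubset (erase_ssubset hv))
      by_cases h9 : #((S.erase v).erase u) < degSum G ((S.erase v).erase u)
      · have := h8 h9
        omega
      · by_cases h10 : 2 ≤ #(nbrIn G S u)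
        · have := h7 h10
          omega
        · omega
    · push Not at h0 h1
      have hge : ∀ v ∈ S, 2 ≤ #(nbrIn G S v) := fun v hv => by
        have := h0 v hv
        have := h1 v hv
        omega
      have hsum : ∑ v ∈ S, 2 = ∑ v ∈ S, #(nbrIn G S v) := by
        refine le_antisymm (sum_le_sum hge) ?_
        have := hG S
        rw [degSum] at this
        rw [sum_const, smul_eq_mul]
        omega
      have hreg : ∀ v ∈ S, #(nbrIn G S v) = 2 := fun v hv =>
        ((sum_eq_sum_iff_of_le hge).1 hsum v hv).symm
      have hne : S.Nonempty := by
        rw [nonempty_iff_ne_empty]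
        rintro rfl
        simp [degSum] at hS
      have := le_card_maxDissoc_of_two_regular hne hreg ih
      have := hG S
      omega

/-- In a connected graph, enlarging a vertex set increases the number of induced edges by at
least the number of new vertices. -/
theorem degSum_add_le_of_connected (hG : G.Connected) {S : Finset V} (hS : S.Nonempty) :
    degSum G S + 2 * (Fintype.card V - #S) ≤ degSum G univ := by
  induction hk : Fintype.card V - #S generalizing S with
  | zero =>
    rw [(card_eq_iff_eq_univ S).1 (le_antisymm (card_le_univ S) (by omega))]
    simp
  | succ k ih =>
    obtain ⟨s, hs⟩ := hS
    obtain ⟨t, -, ht⟩ := exists_of_ssubset ((ssubset_univ_iff (s := S)).2 (by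
      rintro rfl
      simp at hk))
    obtain ⟨p⟩ := hG.preconnected s t
    obtain ⟨d, -, hd1, hd2⟩ := p.exists_boundary_dart (S : Set V) hs ht
    have hd2 : d.snd ∉ S := hd2
    have hcard := card_insert_of_notMem hd2
    have h1 := ih (S := insert d.snd S) (insert_nonempty _ _) (by omega)
    have h2 := degSum_erase (G := G) (mem_insert_self d.snd S)
    rw [erase_insert hd2] at h2
    have h3 : 0 < #(nbrIn G (insert d.snd S) d.snd) :=
      card_pos.2 ⟨d.fst, mem_nbrIn.2 ⟨mem_insert_of_mem hd1, d.adj.symm⟩⟩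
    omega

theorem degSum_univ : degSum G univ = 2 * G.edgeSet.ncard := by
  rw [← coe_edgeFinset, Set.ncard_coe_finset, ← sum_degrees_eq_twice_card_edges, degSum]
  refine sum_congr rfl fun v _ => ?_
  rw [← card_neighborFinset_eq_degree]
  congr 1
  ext
  simp [mem_nbrIn]

theorem phi_eq_card_maxDissoc : phi G = #(maxDissoc G univ) := by
  rw [phi, ← Set.ncard_coe_finset, ← Set.ncard_image_of_injective _ Finset.coe_injective]
  congr 1
  ext S
  simp only [Set.mem_ofPred_eq, Set.mem_image, mem_coe, mem_maxDissoc]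
  constructor
  · rintro ⟨h1, h2⟩
    refine ⟨S.toFinset, ⟨⟨subset_univ _, by simpa using h1⟩, fun B hB hSB => ?_⟩, by simp⟩
    have := h2 B hB.2 (by simpa using coe_subset.2 hSB)
    simp [this]
  · rintro ⟨T, hT, rfl⟩
    refine ⟨hT.prop.2, fun B hB hTB => ?_⟩
    have := hT.eq_of_le (y := B.toFinset) ⟨subset_univ _, by simpa using hB⟩
      (by simpa [← coe_subset] using hTB)
    rw [this]
    simp

theorem degSum_le_of_isUnicyclic (hG : IsUnicyclic G) (S : Finset V) :
    degSum G S ≤ 2 * #S := by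
  rcases S.eq_empty_or_nonempty with rfl | hS
  · simp [degSum]
  · have h1 := degSum_add_le_of_connected hG.1 hS
    rw [degSum_univ, hG.2] at h1
    have := card_le_univ S
    omega

end DissociationInduction

/-- every unicyclic graph of order `n ≥ 3` has at least `⌊n/2⌋ + 2`
maximal dissociation sets. -/
theorem stmt0 {V : Type*} [Fintype V] (G : SimpleGraph V) (n : ℕ) (hn : 3 ≤ n)
    (hcard : Fintype.card V = n) (hG : IsUnicyclic G) :
    n / 2 + 2 ≤ phi G := by
  have h := degSum_add_four_le (degSum_le_of_isUnicyclic hG) Finset.univ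
  rw [degSum_univ, hG.2, Finset.card_univ, hcard, ← phi_eq_card_maxDissoc] at h
  have := h (by omega)
  omega
end

section
/- Let n ≥ 3 be odd and let G be a unicyclic graph of order n. Then φ(G) = ⌊n/2⌋ + 2 if and only if G is isomorphic to U((n-3)/2, (n-3)/2). -/
open SimpleGraph

section DissociationSets

variable {V W : Type*} {G : SimpleGraph V} {H : SimpleGraph W}

lemma IsDissoc.mono {S T : Set V} (hT : IsDissoc G T) (h : S ⊆ T) : IsDissoc G S :=
  fun v hv _ hx _ hy => hT v (h hv) ⟨h hx.1, hx.2⟩ ⟨h hy.1, hy.2⟩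

lemma IsDissoc.exists_isMaxDissoc [Finite V] {T : Set V} (hT : IsDissoc G T) :
    ∃ S, IsMaxDissoc G S ∧ T ⊆ S := by
  obtain ⟨S, hTS, hS⟩ := (Set.toFinite {S : Set V | IsDissoc G S}).exists_le_maximal hT
  exact ⟨S, ⟨hS.prop, fun R hR hSR => hS.eq_of_le hR hSR⟩, hTS⟩

lemma isMaxDissoc_of_forall_insert {S : Set V} (hS : IsDissoc G S)
    (h : ∀ v ∉ S, ¬ IsDissoc G (insert v S)) : IsMaxDissoc G S := by
  refine ⟨hS, fun T hT hST => hST.antisymm fun v hv => ?_⟩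
  by_contra hvS
  exact h v hvS (hT.mono (Set.insert_subset hv hST))

lemma IsDissoc.preimage (f : H ↪g G) {S : Set V} (hS : IsDissoc G S) :
    IsDissoc H (f ⁻¹' S) := by
  intro v hv x hx y hy
  exact f.injective (hS (f v) hv ⟨hx.1, f.map_adj_iff.2 hx.2⟩ ⟨hy.1, f.map_adj_iff.2 hy.2⟩)

lemma IsDissoc.image (f : H ↪g G) {S : Set W} (hS : IsDissoc H S) : IsDissoc G (f '' S) := by
  rintro _ ⟨v, hv, rfl⟩ _ ⟨⟨x, hx, rfl⟩, hvx⟩ _ ⟨⟨y, hy, rfl⟩, hvy⟩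
  rw [hS v hv ⟨hx, f.map_adj_iff.1 hvx⟩ ⟨hy, f.map_adj_iff.1 hvy⟩]

lemma IsMaxDissoc.exists_extension [Finite V] (f : H ↪g G) {S : Set W} {T : Set V}
    (hS : IsMaxDissoc H S) (hT : IsDissoc G T) (hST : S ⊆ f ⁻¹' T) :
    ∃ R, IsMaxDissoc G R ∧ T ⊆ R ∧ f ⁻¹' R = S := by
  obtain ⟨R, hR, hTR⟩ := hT.exists_isMaxDissoc
  exact ⟨R, hR, hTR, (hS.2 _ (hR.1.preimage f) (hST.trans (Set.preimage_mono hTR))).symm⟩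

/-- If every maximal dissociation set of an induced subgraph is the trace of one with property `Q`,
the maximal dissociation sets that violate `Q` or have a non-maximal trace come on top. -/
lemma phi_add_ncard_le [Finite V] (f : H ↪g G) (Q : Set V → Prop) (A : Set (Set V))
    (hQ : ∀ S, IsMaxDissoc H S → ∃ R, IsMaxDissoc G R ∧ Q R ∧ f ⁻¹' R = S)
    (hA : ∀ R ∈ A, IsMaxDissoc G R ∧ (Q R → ¬ IsMaxDissoc H (f ⁻¹' R))) :
    phi H + A.ncard ≤ phi G := by
  have : Finite W := Finite.of_injective f f.injective
  choose! g hg using hQ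
  have hinj : Set.InjOn g {S | IsMaxDissoc H S} := by
    intro S hS T hT h
    rw [← (hg S hS).2.2, ← (hg T hT).2.2, h]
  have hdisj : Disjoint (g '' {S | IsMaxDissoc H S}) A := by
    rw [Set.disjoint_left]
    rintro _ ⟨S, hS, rfl⟩ hR
    exact (hA _ hR).2 (hg S hS).2.1 (by rw [(hg S hS).2.2]; exact hS)
  unfold phi
  rw [← hinj.ncard_image, ← Set.ncard_union_eq hdisj (Set.toFinite _) (Set.toFinite _)]
  refine Set.ncard_le_ncard ?_ (Set.toFinite _)
  rintro R (⟨S, hS, rfl⟩ | hR)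
  · exact (hg S hS).1
  · exact (hA R hR).1

lemma phi_le_of_embedding [Finite V] (f : H ↪g G) : phi H ≤ phi G := by
  have := phi_add_ncard_le f (fun _ => True) ∅ (fun S hS => ?_) (by simp)
  · simpa using this
  · obtain ⟨R, hR, -, h⟩ := hS.exists_extension f (hS.1.image f) (Set.subset_preimage_image f S)
    exact ⟨R, hR, trivial, h⟩

lemma phi_induce_add_ncard_le [Finite V] (p : V) (A : Set (Set V))
    (hA : ∀ S ∈ A, IsMaxDissoc G S ∧ ∃ z ∉ S, z ≠ p ∧ IsDissoc G (insert z (S \ {p}))) :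
    phi (G.induce {p}ᶜ) + A.ncard ≤ phi G := by
  refine phi_add_ncard_le (Embedding.induce {p}ᶜ) (fun _ => True) A (fun S hS => ?_)
    fun S hS => ⟨(hA S hS).1, fun _ hmax => ?_⟩
  · obtain ⟨R, hR, -, h⟩ := hS.exists_extension (Embedding.induce {p}ᶜ)
      (hS.1.image _) (Set.subset_preimage_image _ S)
    exact ⟨R, hR, trivial, h⟩
  · obtain ⟨-, z, hzS, hzp, hz⟩ := hA S hS
    have hsub : (Embedding.induce (G := G) {p}ᶜ) ⁻¹' S ⊆
        (Embedding.induce (G := G) {p}ᶜ) ⁻¹' (insert z (S \ {p})) := by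
      intro v hv
      exact Or.inr ⟨hv, v.2⟩
    have heq := hmax.2 _ (hz.preimage _) hsub
    have hmem : (⟨z, hzp⟩ : ({p}ᶜ : Set V)) ∈
        (Embedding.induce (G := G) {p}ᶜ) ⁻¹' (insert z (S \ {p})) := Or.inl rfl
    rw [← heq] at hmem
    exact hzS hmem

lemma phi_induce_add_one_le [Finite V] {p z : V} {S : Set V} (hS : IsMaxDissoc G S) (hz : z ∉ S)
    (hzp : z ≠ p) (h : IsDissoc G (insert z (S \ {p}))) : phi (G.induce {p}ᶜ) + 1 ≤ phi G := by
  have := phi_induce_add_ncard_le (G := G) p {S}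
    (by rintro _ rfl; exact ⟨hS, z, hz, hzp, h⟩)
  simpa using this

end DissociationSets

section PendantPaths

variable {V W : Type*} {G : SimpleGraph V} {H : SimpleGraph W}

/-- `p` is a vertex of degree 1 whose neighbour is `y`. -/
def IsPendantAt (G : SimpleGraph V) (p y : V) : Prop := ∀ z, G.Adj p z ↔ z = y

/-- Deleting `c` from `G` leaves a perfect matching. -/
def IsMatchedOff (G : SimpleGraph V) (c : V) : Prop := ∀ v, v ≠ c → ∃! u, u ≠ c ∧ G.Adj v u

lemma IsPendantAt.adj {p y : V} (h : IsPendantAt G p y) : G.Adj p y := (h y).2 rfl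

lemma isDissoc_pair_s1 (a b : V) : IsDissoc G {a, b} := by
  rintro v (rfl | rfl) x ⟨rfl | rfl, h1⟩ y ⟨rfl | rfl, h2⟩ <;> simp_all

lemma not_isDissoc {S : Set V} {v x y : V} (hv : v ∈ S) (hx : x ∈ S) (hy : y ∈ S) (hxy : x ≠ y)
    (hvx : G.Adj v x) (hvy : G.Adj v y) : ¬ IsDissoc G S :=
  fun h => hxy (h v hv ⟨hx, hvx⟩ ⟨hy, hvy⟩)

lemma phi_add_ncard_le_of_pendant_path [Finite V] (f : H ↪g G) {u v : V} {w : W}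
    (hu : u ∉ Set.range f) (hv : v ∉ Set.range f) (hur : IsPendantAt G u v)
    (hvr : ∀ z, G.Adj v z ↔ z = u ∨ z = f w) (A : Set (Set V))
    (hA : ∀ R ∈ A, IsMaxDissoc G R ∧ (u ∈ R → ¬ IsMaxDissoc H (f ⁻¹' R))) :
    phi H + A.ncard ≤ phi G := by
  refine phi_add_ncard_le f (fun R => u ∈ R) A (fun S hS => ?_) hA
  have hT : IsDissoc G (insert u (f '' S)) := by
    rintro x (rfl | ⟨s, hs, rfl⟩) a ⟨ha, hxa⟩ b ⟨hb, hxb⟩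
    · rw [(hur a).1 hxa, (hur b).1 hxb]
    · have key : ∀ a, a ∈ insert u (f '' S) → G.Adj (f s) a → a ∈ f '' S := by
        rintro a (rfl | ha) hxa
        · exact absurd ((hur _).1 hxa.symm ▸ ⟨s, rfl⟩) hv
        · exact ha
      exact hS.1.image f (f s) ⟨s, hs, rfl⟩ ⟨key a ha hxa, hxa⟩ ⟨key b hb hxb, hxb⟩
  obtain ⟨R, hR, hTR, h⟩ := hS.exists_extension f hT
    ((Set.subset_preimage_image f S).trans (Set.preimage_mono (Set.subset_insert _ _)))
  exact ⟨R, hR, hTR (Set.mem_insert _ _), h⟩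

lemma exists_isMaxDissoc_notMem_of_pendant_path [Finite V] {u v w : V} (huv : G.Adj v u)
    (hvw : G.Adj v w) (huw : u ≠ w) : ∃ S, IsMaxDissoc G S ∧ u ∉ S := by
  obtain ⟨S, hS, hsub⟩ := (isDissoc_pair_s1 (G := G) v w).exists_isMaxDissoc
  refine ⟨S, hS, fun hu => ?_⟩
  exact not_isDissoc (hsub (Or.inl rfl)) hu (hsub (Or.inr rfl)) huw huv hvw hS.1

lemma phi_add_one_le_of_pendant_path [Finite V] (f : H ↪g G) {u v : V} {w : W}
    (hu : u ∉ Set.range f) (hv : v ∉ Set.range f) (hur : IsPendantAt G u v)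
    (hvr : ∀ z, G.Adj v z ↔ z = u ∨ z = f w) : phi H + 1 ≤ phi G := by
  obtain ⟨S, hS, huS⟩ := exists_isMaxDissoc_notMem_of_pendant_path ((hvr u).2 (Or.inl rfl))
    ((hvr (f w)).2 (Or.inr rfl)) (fun h => hu ⟨w, h.symm⟩)
  simpa using phi_add_ncard_le_of_pendant_path f hu hv hur hvr {S}
    (by rintro _ rfl; exact ⟨hS, fun h => absurd h huS⟩)

lemma phi_add_two_le_of_pendant_path [Finite V] (f : H ↪g G) {u v : V} {w c : W}
    (hu : u ∉ Set.range f) (hv : v ∉ Set.range f)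
    (hsurj : ∀ x, x ≠ u → x ≠ v → x ∈ Set.range f) (hur : IsPendantAt G u v)
    (hvr : ∀ z, G.Adj v z ↔ z = u ∨ z = f w) (hc : IsMatchedOff H c) (hwc : w ≠ c)
    {a b : W} (hab : a ≠ b) (haw : a ≠ w) (hbw : b ≠ w) (hca : H.Adj c a) (hcb : H.Adj c b) :
    phi H + 2 ≤ phi G := by
  obtain ⟨S, hS, huS⟩ := exists_isMaxDissoc_notMem_of_pendant_path ((hvr u).2 (Or.inl rfl))
    ((hvr (f w)).2 (Or.inr rfl)) (fun h => hu ⟨w, h.symm⟩)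
  have huf : ∀ t, u ≠ f t := fun t h => hu ⟨t, h.symm⟩
  have hvf : ∀ t, v ≠ f t := fun t h => hv ⟨t, h.symm⟩
  set R : Set V := {f c, f w}ᶜ with hRdef
  have hmem : ∀ x, x ∈ R ↔ x ≠ f c ∧ x ≠ f w := by intro x; simp [hRdef]
  have hmemf : ∀ t, f t ∈ R ↔ t ≠ c ∧ t ≠ w := by intro t; simp [hmem]
  have huR : u ∈ R := (hmem u).2 ⟨huf c, huf w⟩
  have hvR : v ∈ R := (hmem v).2 ⟨hvf c, hvf w⟩
  have hRd : IsDissoc G R := by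
    intro x hx y ⟨hy, hxy⟩ z ⟨hz, hxz⟩
    by_cases hxu : x = u
    · subst hxu
      rw [(hur y).1 hxy, (hur z).1 hxz]
    by_cases hxv : x = v
    · subst hxv
      rcases (hvr y).1 hxy with rfl | rfl
      · rcases (hvr z).1 hxz with rfl | rfl
        · rfl
        · exact absurd rfl ((hmem _).1 hz).2
      · exact absurd rfl ((hmem _).1 hy).2
    obtain ⟨s, rfl⟩ := hsurj x hxu hxv
    have key : ∀ y ∈ R, G.Adj (f s) y → ∃ t, t ≠ c ∧ H.Adj s t ∧ f t = y := by
      intro y hy hsy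
      by_cases hyu : y = u
      · subst hyu
        exact absurd ((hur _).1 hsy.symm).symm (hvf s)
      by_cases hyv : y = v
      · subst hyv
        rcases (hvr _).1 hsy.symm with h | h
        · exact absurd h.symm (huf s)
        · exact absurd h ((hmem _).1 hx).2
      obtain ⟨t, rfl⟩ := hsurj y hyu hyv
      exact ⟨t, ((hmemf t).1 hy).1, f.map_adj_iff.1 hsy, rfl⟩
    obtain ⟨t, htc, hst, rfl⟩ := key y hy hxy
    obtain ⟨t', htc', hst', rfl⟩ := key z hz hxz
    rw [(hc s ((hmemf s).1 hx).1).unique ⟨htc, hst⟩ ⟨htc', hst'⟩]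
  have hRmax : IsMaxDissoc G R := by
    refine isMaxDissoc_of_forall_insert hRd fun x hx => ?_
    have hx' : x = f c ∨ x = f w := by
      by_contra h
      push Not at h
      exact hx ((hmem x).2 h)
    rcases hx' with rfl | rfl
    · exact not_isDissoc (Set.mem_insert _ _)
        (Set.mem_insert_of_mem _ ((hmemf a).2 ⟨hca.ne', haw⟩))
        (Set.mem_insert_of_mem _ ((hmemf b).2 ⟨hcb.ne', hbw⟩))
        (fun h => hab (f.injective h)) (f.map_adj_iff.2 hca) (f.map_adj_iff.2 hcb)
    · obtain ⟨s, ⟨hsc, hws⟩, -⟩ := hc w hwc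
      exact not_isDissoc (Set.mem_insert _ _)
        (Set.mem_insert_of_mem _ ((hmemf s).2 ⟨hsc, hws.ne'⟩))
        (Set.mem_insert_of_mem _ hvR) (hvf s).symm (f.map_adj_iff.2 hws)
        ((hvr (f w)).2 (Or.inr rfl)).symm
  have hRtrace : ¬ IsMaxDissoc H (f ⁻¹' R) := by
    intro h
    have hd : IsDissoc H {c}ᶜ := fun s hs x hx y hy => (hc s hs).unique hx hy
    have hsub : f ⁻¹' R ⊆ {c}ᶜ := fun t ht => ((hmemf t).1 ht).1
    have hw : w ∈ f ⁻¹' R := by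
      rw [h.2 _ hd hsub]
      exact hwc
    exact ((hmemf w).1 hw).2 rfl
  have := phi_add_ncard_le_of_pendant_path f hu hv hur hvr {S, R} (by
    rintro _ (rfl | rfl)
    · exact ⟨hS, fun h => absurd h huS⟩
    · exact ⟨hRmax, fun _ => hRtrace⟩)
  have hSR : S ≠ R := by
    rintro rfl
    exact huS huR
  rwa [Set.ncard_pair hSR] at this

lemma IsMatchedOff.of_pendant_path (f : H ↪g G) {u v : V} {c : W}
    (hu : u ∉ Set.range f) (hv : v ∉ Set.range f)
    (hsurj : ∀ x, x ≠ u → x ≠ v → x ∈ Set.range f) (hur : IsPendantAt G u v)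
    (hvr : ∀ z, G.Adj v z ↔ z = u ∨ z = f c) (hc : IsMatchedOff H c) :
    IsMatchedOff G (f c) := by
  have huf : ∀ t, u ≠ f t := fun t h => hu ⟨t, h.symm⟩
  have hvf : ∀ t, v ≠ f t := fun t h => hv ⟨t, h.symm⟩
  intro x hx
  by_cases hxu : x = u
  · subst hxu
    exact ⟨v, ⟨hvf c, hur.adj⟩, fun y hy => (hur y).1 hy.2⟩
  by_cases hxv : x = v
  · subst hxv
    exact ⟨u, ⟨huf c, hur.adj.symm⟩, fun y hy => ((hvr y).1 hy.2).resolve_right hy.1⟩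
  obtain ⟨s, rfl⟩ := hsurj x hxu hxv
  have hsc : s ≠ c := fun h => hx (h ▸ rfl)
  obtain ⟨t, ⟨htc, hst⟩, ht⟩ := hc s hsc
  refine ⟨f t, ⟨fun h => htc (f.injective h), f.map_adj_iff.2 hst⟩, ?_⟩
  rintro y ⟨hyc, hsy⟩
  by_cases hyu : y = u
  · subst hyu
    exact absurd ((hur _).1 hsy.symm).symm (hvf s)
  by_cases hyv : y = v
  · subst hyv
    rcases (hvr _).1 hsy.symm with h | h
    · exact absurd h.symm (huf s)
    · exact absurd h hx
  obtain ⟨t', rfl⟩ := hsurj y hyu hyv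
  rw [ht t' ⟨fun h => hyc (h ▸ rfl), f.map_adj_iff.1 hsy⟩]

end PendantPaths

section Counting

variable {V : Type*} {G : SimpleGraph V}

open Classical in
lemma sum_degree_eq [Fintype V] : ∑ v, G.degree v = 2 * G.edgeSet.ncard := by
  rw [sum_degrees_eq_twice_card_edges, ← coe_edgeFinset, Set.ncard_coe_finset]

open Classical in
lemma ncard_edgeSet_induce_compl_singleton [Fintype V] (p : V) :
    (G.induce {p}ᶜ).edgeSet.ncard + G.degree p = G.edgeSet.ncard := by
  have h1 := card_edgeFinset_induce_compl_singleton G p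
  rw [card_edgeFinset_deleteIncidenceSet] at h1
  have h2 := G.degree_le_card_edgeFinset p
  have h3 : (G.induce {p}ᶜ).edgeSet.ncard = (G.induce {p}ᶜ).edgeFinset.card := by
    rw [← coe_edgeFinset, Set.ncard_coe_finset]
  have h4 : G.edgeSet.ncard = G.edgeFinset.card := by
    rw [← coe_edgeFinset, Set.ncard_coe_finset]
  omega

lemma card_compl_singleton_add_one [Finite V] (p : V) :
    Nat.card ({p}ᶜ : Set V) + 1 = Nat.card V := by
  have h := Set.ncard_add_ncard_compl {p}
  rw [Set.ncard_singleton] at h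
  rw [Nat.card_coe_set_eq]
  omega

lemma IsPendantAt.degree_eq_one {p y : V} [Fintype (G.neighborSet p)] (hp : IsPendantAt G p y) :
    G.degree p = 1 :=
  degree_eq_one_iff_existsUnique_adj.2 ⟨y, hp.adj, fun z hz => (hp z).1 hz⟩

lemma connected_induce_compl_of_isPendantAt [Finite V] {p y : V} (hconn : G.Connected)
    (hp : IsPendantAt G p y) :
    (G.induce {p}ᶜ).Connected ∧ (G.induce {p}ᶜ).edgeSet.ncard + 1 = G.edgeSet.ncard := by
  classical
  have := Fintype.ofFinite V
  refine ⟨hconn.induce_compl_singleton_of_degree_eq_one hp.degree_eq_one, ?_⟩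
  rw [← ncard_edgeSet_induce_compl_singleton (G := G) p, hp.degree_eq_one]

lemma mem_of_connected (hconn : G.Connected) {A : Set V} {a : V} (ha : a ∈ A)
    (hA : ∀ x ∈ A, ∀ y, G.Adj x y → y ∈ A) (x : V) : x ∈ A := by
  obtain ⟨w⟩ := hconn.preconnected a x
  induction w with
  | nil => exact ha
  | cons h _ ih => exact ih (hA _ ha _ h)

end Counting

section Core

variable {V : Type*} {G : SimpleGraph V}

/-- The vertices of degree 1. -/
def pendants (G : SimpleGraph V) : Set V := {p | ∃ y, IsPendantAt G p y}

lemma card_le_two_of_isPendantAt [Finite V] {p y w : V} (hconn : G.Connected)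
    (hp : IsPendantAt G p y) (hy : IsPendantAt G y w) : Nat.card V ≤ 2 := by
  obtain rfl : p = w := (hy p).1 hp.adj.symm
  have h : (Set.univ : Set V) ⊆ {p, y} := fun x _ =>
    mem_of_connected hconn (A := {p, y}) (Or.inl rfl) (by
      rintro _ (rfl | rfl) z hz
      · exact Or.inr ((hp z).1 hz)
      · exact Or.inl ((hy z).1 hz)) x
  calc Nat.card V = (Set.univ : Set V).ncard := (Set.ncard_univ V).symm
    _ ≤ ({p, y} : Set V).ncard := Set.ncard_le_ncard h (Set.toFinite _)
    _ ≤ 2 := (Set.ncard_insert_le p {y}).trans (by rw [Set.ncard_singleton])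

lemma IsPendantAt.notMem_pendants [Finite V] (hn : 3 ≤ Nat.card V) (hconn : G.Connected) {p y : V}
    (hp : IsPendantAt G p y) : y ∉ pendants G := by
  rintro ⟨w, hw⟩
  have := card_le_two_of_isPendantAt hconn hp hw
  omega

open Classical in
lemma degree_eq_core_add [Fintype V] (v : V) :
    G.degree v = {z | G.Adj v z ∧ z ∉ pendants G}.toFinset.card +
      {z | G.Adj v z ∧ z ∈ pendants G}.toFinset.card := by
  rw [← Finset.card_union_of_disjoint, ← card_neighborFinset_eq_degree]
  · congr 1
    ext z
    simp
    tauto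
  · rw [Finset.disjoint_left]
    intro z
    simp
    tauto

open Classical in
lemma sum_core_degree [Fintype V] (hn : 3 ≤ Nat.card V) (hconn : G.Connected) :
    ∑ v ∈ (pendants G)ᶜ.toFinset, {z | G.Adj v z ∧ z ∉ pendants G}.toFinset.card
      + 2 * (pendants G).toFinset.card = 2 * G.edgeSet.ncard := by
  have hleaf : ∑ v ∈ (pendants G).toFinset, G.degree v = (pendants G).toFinset.card := by
    rw [Finset.card_eq_sum_ones]
    refine Finset.sum_congr rfl fun v hv => ?_
    obtain ⟨y, hy⟩ := Set.mem_toFinset.1 hv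
    exact hy.degree_eq_one
  have hcross : ∑ v ∈ (pendants G)ᶜ.toFinset, {z | G.Adj v z ∧ z ∈ pendants G}.toFinset.card
      = ∑ v ∈ (pendants G).toFinset, G.degree v := by
    have h := Finset.sum_card_bipartiteAbove_eq_sum_card_bipartiteBelow G.Adj
      (s := (pendants G)ᶜ.toFinset) (t := (pendants G).toFinset)
    refine Eq.trans ?_ (h.trans ?_)
    · refine Finset.sum_congr rfl fun v _ => ?_
      congr 1
      ext z
      simp [Finset.bipartiteAbove, and_comm]
    · refine Finset.sum_congr rfl fun v hv => ?_
      rw [← card_neighborFinset_eq_degree]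
      congr 1
      ext z
      obtain ⟨y, hy⟩ := Set.mem_toFinset.1 hv
      simp only [Finset.bipartiteBelow, Finset.mem_filter, Set.mem_toFinset, Set.mem_compl_iff,
        mem_neighborFinset, G.adj_comm z v, and_iff_right_iff_imp]
      intro hz
      rw [(hy z).1 hz]
      exact hy.notMem_pendants hn hconn
  rw [← sum_degree_eq, ← Finset.sum_add_sum_compl (pendants G).toFinset, ← Set.toFinset_compl,
    Finset.sum_congr rfl (fun v _ => degree_eq_core_add (G := G) v)
      (s₁ := (pendants G)ᶜ.toFinset), Finset.sum_add_distrib, hcross, hleaf]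
  ring

open Classical in
lemma two_le_core_degree [Fintype V] (hn : 3 ≤ Nat.card V) (hconn : G.Connected)
    (hT : ∀ p q y, IsPendantAt G p y → IsPendantAt G q y → p = q)
    (hP : ∀ u v w, u ≠ w → IsPendantAt G u v → ¬ ∀ z, G.Adj v z ↔ z = u ∨ z = w)
    {v : V} (hv : v ∉ pendants G) :
    2 ≤ {z | G.Adj v z ∧ z ∉ pendants G}.toFinset.card := by
  have : Nontrivial V := by
    rw [← Finite.one_lt_card_iff_nontrivial]
    omega
  have hdeg0 : 0 < G.degree v := hconn.preconnected.degree_pos_of_nontrivial v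
  have hdeg1 : G.degree v ≠ 1 := by
    intro h
    obtain ⟨y, hy, hy'⟩ := degree_eq_one_iff_existsUnique_adj.1 h
    exact hv ⟨y, fun z => ⟨fun hz => hy' z hz, fun hz => hz ▸ hy⟩⟩
  have hpend : ∀ z, G.Adj v z → z ∈ pendants G → IsPendantAt G z v := by
    rintro z hz ⟨y, hy⟩
    obtain rfl := (hy v).1 hz.symm
    exact hy
  have hone : {z | G.Adj v z ∧ z ∈ pendants G}.toFinset.card ≤ 1 := by
    rw [Finset.card_le_one]
    intro a ha b hb
    rw [Set.mem_toFinset] at ha hb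
    exact hT a b v (hpend a ha.1 ha.2) (hpend b hb.1 hb.2)
  have hsum := degree_eq_core_add (G := G) v
  by_contra hlt
  have hc : {z | G.Adj v z ∧ z ∉ pendants G}.toFinset.card = 1 := by omega
  have hl : {z | G.Adj v z ∧ z ∈ pendants G}.toFinset.card = 1 := by omega
  obtain ⟨w, hw⟩ := Finset.card_eq_one.1 hc
  obtain ⟨u, hu⟩ := Finset.card_eq_one.1 hl
  have hw' : ∀ z, (G.Adj v z ∧ z ∉ pendants G) ↔ z = w := by
    intro z
    rw [← Finset.mem_singleton, ← hw, Set.mem_toFinset, Set.mem_ofPred_eq]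
  have hu' : ∀ z, (G.Adj v z ∧ z ∈ pendants G) ↔ z = u := by
    intro z
    rw [← Finset.mem_singleton, ← hu, Set.mem_toFinset, Set.mem_ofPred_eq]
  have huu := (hu' u).2 rfl
  have hww := (hw' w).2 rfl
  refine hP u v w (fun h => hww.2 (h ▸ huu.2)) (hpend u huu.1 huu.2) fun z => ?_
  rw [← hw' z, ← hu' z]
  tauto

/-- A connected graph with fewer edges than vertices has two pendant vertices with a common
neighbour or a pendant path of length 2. -/
lemma exists_reduction_of_edges_lt [Finite V] (hn : 3 ≤ Nat.card V) (hconn : G.Connected)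
    (hE : G.edgeSet.ncard < Nat.card V) :
    (∃ p q y, p ≠ q ∧ IsPendantAt G p y ∧ IsPendantAt G q y) ∨
      ∃ u v w, u ≠ w ∧ IsPendantAt G u v ∧ ∀ z, G.Adj v z ↔ z = u ∨ z = w := by
  classical
  have := Fintype.ofFinite V
  by_contra! h
  have h2 := fun v (hv : v ∈ (pendants G)ᶜ.toFinset) =>
    two_le_core_degree hn hconn (fun p q y hp hq => by_contra fun hne => h.1 p q y hne hp hq)
      (fun u v w huw hu hvw => by
        obtain ⟨z, hz⟩ := h.2 u v w huw hu
        have := hvw z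
        tauto) (by simpa using hv : v ∉ pendants G)
  have h3 := Finset.sum_le_sum h2
  have h4 := sum_core_degree hn hconn
  rw [Finset.sum_const, Set.toFinset_compl, smul_eq_mul, Finset.card_compl,
    ← Nat.card_eq_fintype_card, ← Set.toFinset_compl] at h3
  omega

/-- A connected graph with as many edges as vertices has two pendant vertices with a common
neighbour or a pendant path of length 2, or its vertices of degree at least 2 induce a 2-regular
graph. -/
lemma exists_reduction_of_edges_eq [Finite V] (hn : 3 ≤ Nat.card V) (hconn : G.Connected)
    (hE : G.edgeSet.ncard = Nat.card V) :
    (∃ p q y, p ≠ q ∧ IsPendantAt G p y ∧ IsPendantAt G q y) ∨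
      (∃ u v w, u ≠ w ∧ IsPendantAt G u v ∧ ∀ z, G.Adj v z ↔ z = u ∨ z = w) ∨
      ((∀ p q y, IsPendantAt G p y → IsPendantAt G q y → p = q) ∧
        ∀ v ∉ pendants G, ∃ a b, a ≠ b ∧
          ∀ z, G.Adj v z ∧ z ∉ pendants G ↔ z = a ∨ z = b) := by
  classical
  have := Fintype.ofFinite V
  rw [← or_assoc]
  refine or_iff_not_imp_left.2 fun h => ?_
  push Not at h
  have hT : ∀ p q y, IsPendantAt G p y → IsPendantAt G q y → p = q :=
    fun p q y hp hq => by_contra fun hne => h.1 p q y hne hp hq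
  have h2 := fun v (hv : v ∈ (pendants G)ᶜ.toFinset) =>
    two_le_core_degree hn hconn hT
      (fun u v w huw hu hvw => by
        obtain ⟨z, hz⟩ := h.2 u v w huw hu
        have := hvw z
        tauto) (by simpa using hv : v ∉ pendants G)
  have h4 := sum_core_degree hn hconn
  have hcard : (pendants G)ᶜ.toFinset.card + (pendants G).toFinset.card = Nat.card V := by
    rw [Nat.card_eq_fintype_card, Set.toFinset_compl, add_comm, Finset.card_add_card_compl]
  have hsum : ∑ v ∈ (pendants G)ᶜ.toFinset, 2
      = ∑ v ∈ (pendants G)ᶜ.toFinset, {z | G.Adj v z ∧ z ∉ pendants G}.toFinset.card := by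
    rw [Finset.sum_const, smul_eq_mul]
    omega
  refine ⟨hT, fun v hv => ?_⟩
  have h5 := (Finset.sum_eq_sum_iff_of_le h2).1 hsum v (by simpa using hv)
  obtain ⟨a, b, hab, hs⟩ := Finset.card_eq_two.1 h5.symm
  refine ⟨a, b, hab, fun z => ?_⟩
  have := Finset.ext_iff.1 hs z
  simpa using this

end Core

section SmallGraphs

variable {V : Type*} {G : SimpleGraph V}

lemma card_le_phi [Finite V] {ι : Type*} (g : ι → Set V)
    (hg : Function.Injective g) (hmax : ∀ i, IsMaxDissoc G (g i)) : Nat.card ι ≤ phi G := by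
  rw [← Set.ncard_univ, ← Set.ncard_image_of_injective _ hg]
  exact Set.ncard_le_ncard (by rintro _ ⟨i, -, rfl⟩; exact hmax i) (Set.toFinite _)

lemma card_le_two_of_isDissoc_univ [Finite V] (hconn : G.Connected)
    (h : IsDissoc G Set.univ) : Nat.card V ≤ 2 := by
  obtain ⟨a⟩ := hconn.nonempty
  have key : ∃ b, ∀ z, G.Adj a z → z = b := by
    by_cases hb : ∃ b, G.Adj a b
    · obtain ⟨b, hb⟩ := hb
      exact ⟨b, fun z hz => h a trivial ⟨trivial, hz⟩ ⟨trivial, hb⟩⟩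
    · exact ⟨a, fun z hz => absurd ⟨z, hz⟩ hb⟩
  obtain ⟨b, hb⟩ := key
  have hsub : (Set.univ : Set V) ⊆ {a, b} := fun x _ =>
    mem_of_connected hconn (A := {a, b}) (Or.inl rfl) (by
      rintro x (rfl | rfl) z hz
      · exact Or.inr (hb z hz)
      · by_cases hax : G.Adj a x
        · exact Or.inl (h x trivial ⟨trivial, hz⟩ ⟨trivial, hax.symm⟩)
        · by_contra hne
          have := mem_of_connected hconn (A := {a}) rfl (by
            rintro _ rfl y hy
            exact absurd (hb y hy ▸ hy) hax) z
          exact hne (Or.inl this)) x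
  calc Nat.card V = (Set.univ : Set V).ncard := (Set.ncard_univ V).symm
    _ ≤ ({a, b} : Set V).ncard := Set.ncard_le_ncard hsub (Set.toFinite _)
    _ ≤ 2 := (Set.ncard_insert_le a {b}).trans (by rw [Set.ncard_singleton])

lemma three_le_phi [Finite V] (hn : Nat.card V = 3) (hconn : G.Connected) : 3 ≤ phi G := by
  rw [← hn]
  refine card_le_phi (fun x : V => ({x}ᶜ : Set V)) (fun x y h => by simpa using h) fun x => ?_
  have hx : ({x}ᶜ : Set V).ncard = 2 := by
    have := Set.ncard_add_ncard_compl {x}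
    rw [Set.ncard_singleton] at this
    omega
  obtain ⟨a, b, -, hab⟩ := Set.ncard_eq_two.1 hx
  refine isMaxDissoc_of_forall_insert (hab ▸ isDissoc_pair_s1 a b) fun v hv hd => ?_
  obtain rfl : v = x := by simpa using hv
  have huniv : insert v ({v}ᶜ : Set V) = Set.univ := by
    ext z
    simp [em]
  have := card_le_two_of_isDissoc_univ hconn (huniv ▸ hd)
  omega

lemma le_phi_of_forall_mem {k m : ℕ} (H : SimpleGraph (Fin k))
    (F : Finset (Finset (Fin k))) (hm : F.card = m)
    (hF : ∀ S ∈ F, (∀ v ∈ S, ∀ x ∈ S, ∀ y ∈ S, H.Adj v x → H.Adj v y → x = y) ∧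
      ∀ z ∉ S, ∃ v ∈ insert z S, ∃ x ∈ insert z S, ∃ y ∈ insert z S,
        x ≠ y ∧ H.Adj v x ∧ H.Adj v y) : m ≤ phi H := by
  have := card_le_phi (G := H) (fun S : F => ((S : Finset (Fin k)) : Set (Fin k)))
    (fun S T h => Subtype.ext (Finset.coe_injective h)) fun S => ?_
  · simpa [hm] using this
  · obtain ⟨h1, h2⟩ := hF S S.2
    refine isMaxDissoc_of_forall_insert
      (fun v hv x hx y hy => h1 v hv x hx.1 y hy.1 hx.2 hy.2) fun z hz => ?_
    obtain ⟨v, hv, x, hx, y, hy, hne, hvx, hvy⟩ := h2 z hz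
    rw [← Finset.coe_insert]
    exact not_isDissoc hv hx hy hne hvx hvy

lemma six_le_phi_cycleGraph_four : 6 ≤ phi (cycleGraph 4) :=
  le_phi_of_forall_mem _ {{0, 1}, {1, 2}, {2, 3}, {0, 3}, {0, 2}, {1, 3}} (by decide)
    (by intro S hS; fin_cases hS <;> exact ⟨by decide, by decide⟩)

lemma five_le_phi_cycleGraph_five : 5 ≤ phi (cycleGraph 5) :=
  le_phi_of_forall_mem _ {{0, 1, 3}, {1, 2, 4}, {2, 3, 0}, {3, 4, 1}, {4, 0, 2}} (by decide)
    (by intro S hS; fin_cases hS <;> exact ⟨by decide, by decide⟩)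

lemma five_le_phi_cycleGraph_six : 5 ≤ phi (cycleGraph 6) :=
  le_phi_of_forall_mem _
    {{0, 1, 3, 4}, {1, 2, 4, 5}, {2, 3, 5, 0}, {0, 2, 4}, {1, 3, 5}} (by decide)
    (by intro S hS; fin_cases hS <;> exact ⟨by decide, by decide⟩)

lemma phi_cycleGraph_le [Finite V] {k : ℕ} (f : Fin k → V) (hf : Function.Injective f)
    (h : ∀ i j, i < j → (G.Adj (f i) (f j) ↔ (cycleGraph k).Adj i j)) :
    phi (cycleGraph k) ≤ phi G := by
  refine phi_le_of_embedding ⟨⟨f, hf⟩, fun {i j} => ?_⟩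
  rcases lt_trichotomy i j with hij | rfl | hij
  · exact h i j hij
  · simp
  · exact (G.adj_comm _ _).trans ((h j i hij).trans (SimpleGraph.adj_comm _ _ _))

lemma six_le_phi_of_cycle [Finite V] {a b c d : V} (hac : a ≠ c) (hbd : b ≠ d)
    (hab : G.Adj a b) (hbc : G.Adj b c) (hcd : G.Adj c d) (hda : G.Adj d a)
    (nac : ¬ G.Adj a c) (nbd : ¬ G.Adj b d) : 6 ≤ phi G := by
  refine six_le_phi_cycleGraph_four.trans (phi_cycleGraph_le ![a, b, c, d] ?_ ?_)
  · have := hab.ne; have := hbc.ne; have := hcd.ne; have := hda.ne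
    intro i j hij
    fin_cases i <;> fin_cases j <;> simp_all
  · intro i j hij
    fin_cases i <;> fin_cases j <;>
      first
      | exact absurd hij (by decide)
      | exact iff_of_true (by first | assumption | (apply SimpleGraph.Adj.symm; assumption))
          (by decide)
      | exact iff_of_false (by assumption) (by decide)

lemma five_le_phi_of_cycle_five [Finite V] {a b c d e : V}
    (hab : G.Adj a b) (hbc : G.Adj b c) (hcd : G.Adj c d) (hde : G.Adj d e) (hea : G.Adj e a)
    (nac : ¬ G.Adj a c) (nad : ¬ G.Adj a d) (nbd : ¬ G.Adj b d) (nbe : ¬ G.Adj b e)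
    (nce : ¬ G.Adj c e) : 5 ≤ phi G := by
  refine five_le_phi_cycleGraph_five.trans (phi_cycleGraph_le ![a, b, c, d, e] ?_ ?_)
  · have := hab.ne; have := hbc.ne; have := hcd.ne; have := hde.ne; have := hea.ne
    have : a ≠ c := fun h => nad (h ▸ hcd)
    have : a ≠ d := fun h => nac (h ▸ hcd.symm)
    have : b ≠ d := fun h => nbe (h ▸ hde)
    have : b ≠ e := fun h => nbd (h ▸ hde.symm)
    have : c ≠ e := fun h => nac (h ▸ hea.symm)
    intro i j hij
    fin_cases i <;> fin_cases j <;> simp_all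
  · intro i j hij
    fin_cases i <;> fin_cases j <;>
      first
      | exact absurd hij (by decide)
      | exact iff_of_true (by first | assumption | (apply SimpleGraph.Adj.symm; assumption))
          (by decide)
      | exact iff_of_false (by assumption) (by decide)

lemma five_le_phi_of_cycle_six [Finite V] {a b c d e f : V} (had : a ≠ d) (hbe : b ≠ e)
    (hcf : c ≠ f) (hab : G.Adj a b) (hbc : G.Adj b c) (hcd : G.Adj c d) (hde : G.Adj d e)
    (hef : G.Adj e f) (hfa : G.Adj f a) (nac : ¬ G.Adj a c) (nad : ¬ G.Adj a d)
    (nae : ¬ G.Adj a e) (nbd : ¬ G.Adj b d) (nbe : ¬ G.Adj b e) (nbf : ¬ G.Adj b f)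
    (nce : ¬ G.Adj c e) (ncf : ¬ G.Adj c f) (ndf : ¬ G.Adj d f) : 5 ≤ phi G := by
  refine five_le_phi_cycleGraph_six.trans (phi_cycleGraph_le ![a, b, c, d, e, f] ?_ ?_)
  · have := hab.ne; have := hbc.ne; have := hcd.ne; have := hde.ne; have := hef.ne
    have := hfa.ne
    have : a ≠ c := fun h => nad (h ▸ hcd)
    have : a ≠ e := fun h => nad (h ▸ hde.symm)
    have : b ≠ d := fun h => nbe (h ▸ hde)
    have : b ≠ f := fun h => nbe (h ▸ hef.symm)
    have : c ≠ e := fun h => ncf (h ▸ hef)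
    have : d ≠ f := fun h => nad (h ▸ hfa.symm)
    intro i j hij
    fin_cases i <;> fin_cases j <;> simp_all
  · intro i j hij
    fin_cases i <;> fin_cases j <;>
      first
      | exact absurd hij (by decide)
      | exact iff_of_true (by first | assumption | (apply SimpleGraph.Adj.symm; assumption))
          (by decide)
      | exact iff_of_false (by assumption) (by decide)

end SmallGraphs

section Extras

variable {V : Type*} {G : SimpleGraph V}

/-- `S` is a maximal dissociation set of `G` whose trace on `G - p` is not maximal. -/
def IsExtra (G : SimpleGraph V) (p : V) (S : Set V) : Prop :=
  IsMaxDissoc G S ∧ ∃ z ∉ S, z ≠ p ∧ IsDissoc G (insert z (S \ {p}))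

lemma isDissoc_insert_diff {S : Set V} {p z s : V} (hS : IsDissoc G S)
    (hz : ∀ t ∈ S \ {p}, G.Adj z t → t = s) (hs : ∀ t ∈ S \ {p}, ¬ G.Adj s t) :
    IsDissoc G (insert z (S \ {p})) := by
  rintro v (rfl | hv) x ⟨hx, hvx⟩ y ⟨hy, hvy⟩
  · have key : ∀ x ∈ insert v (S \ {p}), G.Adj v x → x = s := by
      rintro x (rfl | hx) hvx
      · exact absurd hvx (G.irrefl)
      · exact hz x hx hvx
    rw [key x hx hvx, key y hy hvy]
  · by_cases hvz : G.Adj v z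
    · obtain rfl := hz v hv hvz.symm
      have key : ∀ x ∈ insert z (S \ {p}), G.Adj v x → x = z := by
        rintro x (rfl | hx) hvx
        · rfl
        · exact absurd hvx (hs x hx)
      rw [key x hx hvx, key y hy hvy]
    · have key : ∀ x ∈ insert z (S \ {p}), G.Adj v x → x ∈ S := by
        rintro x (rfl | hx) hvx
        · exact absurd hvx hvz
        · exact hx.1
      exact hS v hv.1 ⟨key x hx hvx, hvx⟩ ⟨key y hy hvy, hvy⟩

lemma exists_isExtra [Finite V] {T : Set V} {p x y : V} (hT : IsDissoc G T) (hp : p ∈ T)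
    (hy : y ∈ T) (hyp : G.Adj y p) (hyx : G.Adj y x) (hxp : x ≠ p)
    (hx : ∀ z, G.Adj x z → z ≠ y → ¬ IsDissoc G (insert z T)) :
    ∃ S, IsExtra G p S ∧ T ⊆ S := by
  obtain ⟨S, hS, hTS⟩ := hT.exists_isMaxDissoc
  refine ⟨S, ⟨hS, x, fun hxS => ?_, hxp, isDissoc_insert_diff (s := y) hS.1 ?_ ?_⟩, hTS⟩
  · exact not_isDissoc (hTS hy) (hTS hp) hxS hxp.symm hyp hyx hS.1
  · intro t ht hxt
    by_contra hne
    exact hx t hxt hne (hS.1.mono (Set.insert_subset ht.1 hTS))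
  · intro t ht hyt
    exact ht.2 (hS.1 y (hTS hy) ⟨ht.1, hyt⟩ ⟨hTS hp, hyp⟩)

lemma isDissoc_pair_union_pair {p y a q : V} (hpa : ¬ G.Adj p a) (hpq : ¬ G.Adj p q)
    (hya : ¬ G.Adj y a) (hyq : ¬ G.Adj y q) : IsDissoc G {p, y, a, q} := by
  have hpa' := fun h => hpa (G.adj_symm h)
  have hpq' := fun h => hpq (G.adj_symm h)
  have hya' := fun h => hya (G.adj_symm h)
  have hyq' := fun h => hyq (G.adj_symm h)
  intro v hv x ⟨hx, hvx⟩ z ⟨hz, hvz⟩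
  simp only [Set.mem_insert_iff, Set.mem_singleton_iff] at hv hx hz
  rcases hv with rfl | rfl | rfl | rfl <;> rcases hx with rfl | rfl | rfl | rfl <;>
    rcases hz with rfl | rfl | rfl | rfl <;> simp_all

end Extras

section Bounds

universe u

variable {V : Type u} {G : SimpleGraph V}

/-- Deleting the two ends of a pendant path of length 2. -/
lemma exists_pendant_path_deletion [Finite V] (hconn : G.Connected) {u v w : V} (huw : u ≠ w)
    (hu : IsPendantAt G u v) (hv : ∀ z, G.Adj v z ↔ z = u ∨ z = w) :
    ∃ (W : Type u) (H : SimpleGraph W) (f : H ↪g G) (w' : W), f w' = w ∧ u ∉ Set.range f ∧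
      v ∉ Set.range f ∧ (∀ x, x ≠ u → x ≠ v → x ∈ Set.range f) ∧ H.Connected ∧
      Nat.card W + 2 = Nat.card V ∧ H.edgeSet.ncard + 2 = G.edgeSet.ncard := by
  have hvu : v ≠ u := hu.adj.ne'
  have hwv : w ≠ v := ((hv w).2 (Or.inr rfl)).ne'
  obtain ⟨hc1, he1⟩ := connected_induce_compl_of_isPendantAt hconn hu
  have hv1 : IsPendantAt (G.induce {u}ᶜ) ⟨v, hvu⟩ ⟨w, huw.symm⟩ := by
    rintro ⟨z, hz⟩
    have hz' : z ≠ u := hz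
    simp [hv z, hz', Subtype.ext_iff]
  obtain ⟨hc2, he2⟩ := connected_induce_compl_of_isPendantAt hc1 hv1
  have hk1 := card_compl_singleton_add_one u
  have hk2 := card_compl_singleton_add_one (⟨v, hvu⟩ : ({u}ᶜ : Set V))
  refine ⟨({⟨v, hvu⟩}ᶜ : Set ({u}ᶜ : Set V)), (G.induce {u}ᶜ).induce {⟨v, hvu⟩}ᶜ,
    (Embedding.induce (G := G) {u}ᶜ).comp
      (Embedding.induce (G := G.induce {u}ᶜ) {⟨v, hvu⟩}ᶜ),
    ⟨⟨w, huw.symm⟩, fun h => hwv (congrArg Subtype.val h)⟩, rfl, ?_, ?_, ?_, hc2,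
    (congrArg (· + 1) hk2).trans hk1, by omega⟩
  · rintro ⟨x, hx⟩
    exact x.1.2 hx
  · rintro ⟨x, hx⟩
    exact x.2 (Subtype.ext hx)
  · intro x hxu hxv
    exact ⟨⟨⟨x, hxu⟩, fun h => hxv (congrArg Subtype.val h)⟩, rfl⟩

/-- Two pendant vertices with a common neighbour give a maximal dissociation set whose trace is not
maximal. -/
lemma exists_isExtra_of_twins [Finite V] {p q y : V} (hpq : p ≠ q) (hp : IsPendantAt G p y)
    (hq : IsPendantAt G q y) : ∃ S, IsExtra G p S := by
  obtain ⟨S, hS, -⟩ := exists_isExtra (isDissoc_pair_s1 p y) (Or.inl rfl) (Or.inr rfl) hp.adj.symm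
    hq.adj.symm hpq.symm fun z hz hzy => absurd ((hq z).1 hz) hzy
  exact ⟨S, hS⟩

lemma IsExtra.phi_induce_add_one_le [Finite V] {p : V} {S : Set V} (h : IsExtra G p S) :
    phi (G.induce {p}ᶜ) + 1 ≤ phi G := by
  obtain ⟨hS, z, hz, hzp, hd⟩ := h
  exact _root_.phi_induce_add_one_le hS hz hzp hd

theorem le_phi_of_tree [Finite V] (hn : 3 ≤ Nat.card V) (hconn : G.Connected)
    (hE : G.edgeSet.ncard + 1 = Nat.card V) : (Nat.card V + 1) / 2 + 1 ≤ phi G := by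
  obtain ⟨n, hcard⟩ : ∃ n, Nat.card V = n := ⟨_, rfl⟩
  induction n using Nat.strong_induction_on generalizing V with
  | _ n ih =>
    rcases hn.eq_or_lt with h3 | h4
    · have := three_le_phi h3.symm hconn
      omega
    rcases exists_reduction_of_edges_lt hn hconn (by omega) with
      ⟨p, q, y, hpq, hp, hq⟩ | ⟨u, v, w, huw, hu, hv⟩
    · obtain ⟨hc, he⟩ := connected_induce_compl_of_isPendantAt hconn hp
      have hk := card_compl_singleton_add_one p
      obtain ⟨S, hS⟩ := exists_isExtra_of_twins hpq hp hq
      have h1 := hS.phi_induce_add_one_le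
      have h2 := ih (n - 1) (by omega) (by omega) hc (by omega) (by omega)
      omega
    · rcases (show 4 ≤ Nat.card V from h4).eq_or_lt with h4 | h5
      · obtain ⟨hc, he⟩ := connected_induce_compl_of_isPendantAt hconn hu
        have hk := card_compl_singleton_add_one u
        have h1 := phi_le_of_embedding (Embedding.induce (G := G) {u}ᶜ)
        have h2 := ih (n - 1) (by omega) (by omega) hc (by omega) (by omega)
        omega
      · obtain ⟨W, H, f, w', rfl, huf, hvf, -, hc, hk, he⟩ :=
          exists_pendant_path_deletion hconn huw hu hv
        have : Finite W := Finite.of_injective f f.injective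
        have h1 := phi_add_one_le_of_pendant_path f huf hvf hu hv
        have h2 := ih (n - 2) (by omega) (by omega) hc (by omega) (by omega)
        omega

/-- The lower bound for unicyclic graphs, with a necessary condition for equality in odd order. -/
def SatisfiesBound (G : SimpleGraph V) : Prop :=
  Nat.card V / 2 + 2 ≤ phi G ∧
    (Odd (Nat.card V) → phi G = Nat.card V / 2 + 2 → ∃ c, IsMatchedOff G c)

lemma SatisfiesBound.of_lt (h : Nat.card V / 2 + 2 < phi G) : SatisfiesBound G :=
  ⟨h.le, fun _ h' => absurd h' h.ne'⟩

lemma SatisfiesBound.of_even (he : Even (Nat.card V)) (h : Nat.card V / 2 + 2 ≤ phi G) :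
    SatisfiesBound G :=
  ⟨h, fun ho => absurd he (Nat.not_even_iff_odd.2 ho)⟩

lemma SatisfiesBound.of_isExtra [Finite V] {p : V} {S : Set V}
    (hH : SatisfiesBound (G.induce {p}ᶜ)) (hS : IsExtra G p S) : SatisfiesBound G := by
  have hk := card_compl_singleton_add_one p
  have h1 := hS.phi_induce_add_one_le
  have h2 := hH.1
  rcases Nat.even_or_odd (Nat.card V) with he | ho
  · exact .of_even he (by omega)
  · rw [Nat.odd_iff] at ho
    exact .of_lt (by omega)

open Classical in
lemma IsMatchedOff.degree_eq [Fintype V] {c v : V} (hc : IsMatchedOff G c) (hv : v ≠ c) :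
    G.degree v = 1 + if G.Adj c v then 1 else 0 := by
  obtain ⟨u, ⟨huc, hvu⟩, huniq⟩ := hc v hv
  rw [← card_neighborFinset_eq_degree]
  split_ifs with hcv
  · refine Finset.card_eq_two.2 ⟨u, c, huc, ?_⟩
    ext z
    simp only [mem_neighborFinset, Finset.mem_insert, Finset.mem_singleton]
    constructor
    · intro hz
      by_cases hzc : z = c
      · exact Or.inr hzc
      · exact Or.inl (huniq z ⟨hzc, hz⟩)
    · rintro (rfl | rfl)
      exacts [hvu, hcv.symm]
  · refine Finset.card_eq_one.2 ⟨u, ?_⟩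
    ext z
    simp only [mem_neighborFinset, Finset.mem_singleton]
    constructor
    · intro hz
      exact huniq z ⟨fun h => hcv (h ▸ hz.symm), hz⟩
    · rintro rfl
      exact hvu

open Classical in
lemma IsMatchedOff.two_mul_degree [Fintype V] {c : V} (hc : IsMatchedOff G c)
    (hE : G.edgeSet.ncard = Nat.card V) : 2 * G.degree c = Nat.card V + 1 := by
  have h1 := sum_degree_eq (G := G)
  rw [← Finset.add_sum_erase _ _ (Finset.mem_univ c),
    Finset.sum_congr rfl (fun v hv => hc.degree_eq (Finset.ne_of_mem_erase hv)),
    Finset.sum_add_distrib, Finset.sum_boole, Finset.sum_const, smul_eq_mul,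
    Finset.card_erase_of_mem (Finset.mem_univ c), Finset.card_univ, hE] at h1
  have h2 : {v ∈ Finset.univ.erase c | G.Adj c v} = G.neighborFinset c := by
    ext v
    simp only [Finset.mem_filter, Finset.mem_erase, Finset.mem_univ, mem_neighborFinset]
    exact ⟨fun h => h.2, fun h => ⟨⟨h.ne', trivial⟩, h⟩⟩
  rw [h2, card_neighborFinset_eq_degree, Nat.card_eq_fintype_card] at h1
  have h3 : 0 < Fintype.card V := Fintype.card_pos_iff.2 ⟨c⟩
  rw [Nat.card_eq_fintype_card]
  simp only [Nat.cast_id] at h1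
  omega

lemma three_le_card_of_edges_eq [Finite V] (hconn : G.Connected)
    (hE : G.edgeSet.ncard = Nat.card V) : 3 ≤ Nat.card V := by
  classical
  have := Fintype.ofFinite V
  have h1 := G.card_edgeFinset_le_card_choose_two
  have h2 : G.edgeSet.ncard = G.edgeFinset.card := by
    rw [← coe_edgeFinset, Set.ncard_coe_finset]
  have h3 : 0 < Nat.card V := by
    have := hconn.nonempty
    exact Nat.card_pos
  rw [← Nat.card_eq_fintype_card] at h1
  by_contra! hlt
  have : Nat.card V = 1 ∨ Nat.card V = 2 := by omega
  have c1 : Nat.choose 1 2 = 0 := rfl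
  have c2 : Nat.choose 2 2 = 1 := rfl
  rcases this with h | h <;> rw [h] at h1 <;> omega

/-- The only unicyclic graph of order 3 is the triangle. -/
lemma adj_of_card_eq_three [Finite V] (hE : G.edgeSet.ncard = Nat.card V)
    (hn : Nat.card V = 3) {a b : V} (hab : a ≠ b) : G.Adj a b := by
  classical
  have := Fintype.ofFinite V
  have h1 : G.edgeFinset = (⊤ : SimpleGraph V).edgeFinset := by
    refine Finset.eq_of_subset_of_card_le (edgeFinset_mono le_top) ?_
    rw [card_edgeFinset_top_eq_card_choose_two, ← Nat.card_eq_fintype_card, hn]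
    rw [← coe_edgeFinset, Set.ncard_coe_finset] at hE
    rw [hE, hn]
    decide
  rw [edgeFinset_inj.1 h1]
  exact hab

lemma isMatchedOff_of_card_eq_three [Finite V] (hE : G.edgeSet.ncard = Nat.card V)
    (hn : Nat.card V = 3) (c : V) : IsMatchedOff G c := by
  intro v hv
  have h2 : ({c, v}ᶜ : Set V).ncard = 1 := by
    have := Set.ncard_add_ncard_compl {c, v}
    rw [Set.ncard_pair hv.symm] at this
    omega
  obtain ⟨x, hx⟩ := Set.ncard_eq_one.1 h2
  have hx' : ∀ z, (z ≠ c ∧ z ≠ v) ↔ z = x := fun z => by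
    simpa [not_or] using Set.ext_iff.1 hx z
  obtain ⟨hxc, hxv⟩ := (hx' x).2 rfl
  exact ⟨x, ⟨hxc, adj_of_card_eq_three hE hn hxv.symm⟩,
    fun z hz => (hx' z).1 ⟨hz.1, hz.2.ne'⟩⟩

lemma SatisfiesBound.of_pendant_path {W : Type*} [Finite V] {H : SimpleGraph W} (f : H ↪g G)
    {u v : V} {w : W} (hu : u ∉ Set.range f) (hv : v ∉ Set.range f)
    (hsurj : ∀ x, x ≠ u → x ≠ v → x ∈ Set.range f) (hur : IsPendantAt G u v)
    (hvr : ∀ z, G.Adj v z ↔ z = u ∨ z = f w) (hE : H.edgeSet.ncard = Nat.card W)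
    (hcard : Nat.card W + 2 = Nat.card V) (hH : Nat.card W / 2 + 2 ≤ phi H)
    (hH' : Odd (Nat.card W) → phi H = Nat.card W / 2 + 2 → ∃ c, IsMatchedOff H c)
    (hn : 3 ≤ Nat.card W) : SatisfiesBound G := by
  have : Finite W := Finite.of_injective f f.injective
  have h1 := phi_add_one_le_of_pendant_path f hu hv hur hvr
  refine ⟨by omega, fun ho heq => ?_⟩
  have ho' : Odd (Nat.card W) := by
    rw [Nat.odd_iff] at *
    omega
  obtain ⟨c, hc⟩ := hH' ho' (by omega)
  rcases hn.eq_or_lt with h3 | h3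
  · exact ⟨_, (isMatchedOff_of_card_eq_three hE h3.symm w).of_pendant_path f hu hv hsurj hur hvr⟩
  by_cases hwc : w = c
  · subst hwc
    exact ⟨_, hc.of_pendant_path f hu hv hsurj hur hvr⟩
  classical
  have := Fintype.ofFinite W
  have hdeg := hc.two_mul_degree hE
  have h2 : 1 < ((H.neighborFinset c).erase w).card := by
    have := Finset.pred_card_le_card_erase (s := H.neighborFinset c) (a := w)
    rw [card_neighborFinset_eq_degree] at this
    rw [Nat.odd_iff] at ho'
    omega
  obtain ⟨a, ha, b, hb, hab⟩ := Finset.one_lt_card.1 h2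
  simp only [Finset.mem_erase, mem_neighborFinset] at ha hb
  have := phi_add_two_le_of_pendant_path f hu hv hsurj hur hvr hc hwc hab ha.1 hb.1 ha.2 hb.2
  omega

end Bounds

section SpikedCycles

variable {V : Type*} {G : SimpleGraph V}

/-- Every vertex is a neighbour of at most one pendant vertex, and the vertices that are not pendant
induce a 2-regular graph. -/
structure IsSpikedCycle (G : SimpleGraph V) : Prop where
  pendant_unique : ∀ p q y, IsPendantAt G p y → IsPendantAt G q y → p = q
  core_regular : ∀ v ∉ pendants G, ∃ a b, a ≠ b ∧
    ∀ z, G.Adj v z ∧ z ∉ pendants G ↔ z = a ∨ z = b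

namespace IsSpikedCycle

lemma isPendantAt_of_mem_pendants {v t : V} (hvt : G.Adj v t) (ht : t ∈ pendants G) :
    IsPendantAt G t v := by
  obtain ⟨y, hy⟩ := ht
  obtain rfl := (hy v).1 hvt.symm
  exact hy

lemma eq_or_eq_or_isPendantAt (h : IsSpikedCycle G) {v x y : V} (hv : v ∉ pendants G)
    (hx : x ∉ pendants G) (hy : y ∉ pendants G) (hvx : G.Adj v x) (hvy : G.Adj v y) (hxy : x ≠ y)
    {t : V} (hvt : G.Adj v t) : t = x ∨ t = y ∨ IsPendantAt G t v := by
  by_cases ht : t ∈ pendants G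
  · exact Or.inr (Or.inr (isPendantAt_of_mem_pendants hvt ht))
  obtain ⟨a, b, -, hab⟩ := h.core_regular v hv
  have h1 := (hab x).1 ⟨hvx, hx⟩
  have h2 := (hab y).1 ⟨hvy, hy⟩
  have h3 := (hab t).1 ⟨hvt, ht⟩
  rcases h1 with rfl | rfl <;> rcases h2 with rfl | rfl <;> tauto

lemma exists_next (h : IsSpikedCycle G) {v x : V} (hv : v ∉ pendants G) (hx : x ∉ pendants G)
    (hvx : G.Adj v x) : ∃ z ∉ pendants G, z ≠ x ∧ G.Adj v z ∧
      ∀ t, G.Adj v t → t = x ∨ t = z ∨ IsPendantAt G t v := by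
  obtain ⟨a, b, hne, hab⟩ := h.core_regular v hv
  have key : ∃ z ∉ pendants G, z ≠ x ∧ G.Adj v z := by
    rcases (hab x).1 ⟨hvx, hx⟩ with rfl | rfl
    · obtain ⟨h1, h2⟩ := (hab b).2 (Or.inr rfl)
      exact ⟨b, h2, hne.symm, h1⟩
    · obtain ⟨h1, h2⟩ := (hab a).2 (Or.inl rfl)
      exact ⟨a, h2, hne, h1⟩
  obtain ⟨z, hz, hzx, hvz⟩ := key
  exact ⟨z, hz, hzx, hvz, fun t ht =>
    h.eq_or_eq_or_isPendantAt hv hx hz hvx hvz hzx.symm ht⟩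

lemma mem_of_closed (hconn : G.Connected) {D : Set V} {a : V} (ha : a ∈ D)
    (hD : ∀ v ∈ D, ∀ t, G.Adj v t → t ∈ D ∨ IsPendantAt G t v) {x : V} (hx : x ∉ pendants G) :
    x ∈ D := by
  have := mem_of_connected hconn (A := D ∪ {t | ∃ y ∈ D, IsPendantAt G t y}) (Or.inl ha) (by
    rintro v (hv | ⟨y, hy, hvy⟩) t ht
    · exact (hD v hv t ht).imp id fun h => ⟨v, hv, h⟩
    · exact Or.inl ((hvy t).1 ht ▸ hy)) x
  rcases this with h | ⟨y, -, hy⟩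
  · exact h
  · exact absurd ⟨y, hy⟩ hx

lemma card_le [Finite V] (h : IsSpikedCycle G) {D E : Finset V} (hD : ∀ x ∉ pendants G, x ∈ D)
    (hE : ∀ p y, IsPendantAt G p y → y ∈ E) : Nat.card V ≤ D.card + E.card := by
  have h1 : (pendants G).ncard ≤ E.card := by
    have hex : ∀ p ∈ pendants G, ∃ y, IsPendantAt G p y := fun p hp => hp
    choose! f hf using hex
    rw [← Set.ncard_coe_finset E]
    exact Set.ncard_le_ncard_of_injOn f (fun p hp => hE p _ (hf p hp))
      (fun p hp q hq hpq => h.pendant_unique p q _ (hf p hp) (hpq ▸ hf q hq))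
  have h2 : (pendants G)ᶜ.ncard ≤ D.card := by
    rw [← Set.ncard_coe_finset D]
    exact Set.ncard_le_ncard (fun x hx => hD x hx) (Set.toFinite _)
  have := Set.ncard_add_ncard_compl (pendants G)
  omega

open Classical in
/-- A pendant vertex `p` at a neighbour of a vertex without pendant neighbours can be deleted at the
cost of a maximal dissociation set, unless the cycle is short. -/
lemma exists_isExtra_of_pendant [Finite V] (h : IsSpikedCycle G) (hn : 3 ≤ Nat.card V)
    (hconn : G.Connected) {p y x : V} (hp : IsPendantAt G p y) (hyx : G.Adj y x)
    (hx : x ∉ pendants G) (hxf : ∀ q, ¬ IsPendantAt G q x) :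
    (∃ S, IsExtra G p S) ∨ (Nat.card V ≤ 8 ∧ 6 ≤ phi G) ∨ (Nat.card V ≤ 6 ∧ 5 ≤ phi G) := by
  have hy := hp.notMem_pendants hn hconn
  have hpp : p ∈ pendants G := ⟨y, hp⟩
  have hxp : x ≠ p := fun h => hx (h ▸ hpp)
  obtain ⟨b, hb, hby, hxb, hNx⟩ := h.exists_next hx hy hyx.symm
  have hNx' : ∀ t, G.Adj x t → t = y ∨ t = b := fun t ht => by
    have := hNx t ht
    have := hxf t
    tauto
  have hbp : b ≠ p := fun h => hb (h ▸ hpp)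
  by_cases hyb : G.Adj y b
  · left
    obtain ⟨S, hS, -⟩ := exists_isExtra (isDissoc_pair_s1 p y) (Or.inl rfl) (Or.inr rfl) hp.adj.symm
      hyx hxp fun z hz hzy => by
        obtain rfl := (hNx' z hz).resolve_left hzy
        exact not_isDissoc (Or.inr (Or.inr rfl)) (Or.inl rfl) (Or.inr (Or.inl rfl)) hbp hyb
          hp.adj.symm
    exact ⟨S, hS⟩
  obtain ⟨a, ha, hax, hba, hNb⟩ := h.exists_next hb hx hxb.symm
  have hay : a ≠ y := fun h => hyb (h ▸ hba.symm)
  have hxa : ¬ G.Adj x a := fun h => (hNx' a h).elim hay hba.ne'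
  by_cases hya : G.Adj y a
  · right; left
    have hD : ∀ t ∉ pendants G, t ∈ ({y, x, b, a} : Finset V) := fun t ht => by
      have := mem_of_closed hconn (D := {y, x, b, a}) (Or.inl rfl) (fun v hv t hvt => by
        simp only [Set.mem_insert_iff, Set.mem_singleton_iff] at hv ⊢
        rcases hv with rfl | rfl | rfl | rfl
        · have := h.eq_or_eq_or_isPendantAt hy hx ha hyx hya hax.symm hvt
          tauto
        · have := hNx' t hvt
          tauto
        · have := hNb t hvt
          tauto
        · have := h.eq_or_eq_or_isPendantAt ha hb hy hba.symm hya.symm hby hvt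
          tauto) ht
      simpa using this
    have := h.card_le hD fun q z hq => hD z (hq.notMem_pendants hn hconn)
    have := Finset.card_le_four (a := y) (b := x) (c := b) (d := a)
    exact ⟨by omega, six_le_phi_of_cycle hby.symm hax.symm hyx hxb hba hya.symm hyb hxa⟩
  have extra : ∀ q, q ≠ y → ¬ G.Adj y q → (G.Adj a q ∧ q ≠ b ∨ G.Adj b q ∧ q ≠ a) →
      ∃ S, IsExtra G p S := fun q hqy hyq hq => by
    obtain ⟨S, hS, -⟩ := exists_isExtra (p := p) (x := x) (y := y)
      (isDissoc_pair_union_pair (fun h => hay ((hp a).1 h)) (fun h => hqy ((hp q).1 h)) hya hyq)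
      (by simp) (by simp) hp.adj.symm hyx hxp fun z hz hzy => by
        obtain rfl := (hNx' z hz).resolve_left hzy
        rcases hq with ⟨haq, hqb⟩ | ⟨hbq, hqa⟩
        · exact not_isDissoc (v := a) (x := z) (y := q) (by simp) (by simp) (by simp) hqb.symm
            hba.symm haq
        · exact not_isDissoc (v := z) (x := a) (y := q) (by simp) (by simp) (by simp) hqa.symm
            hba hbq
    exact ⟨S, hS⟩
  have extra' : ∀ q, IsPendantAt G q a ∨ IsPendantAt G q b → ∃ S, IsExtra G p S := fun q hq => by
    have hqp : q ∈ pendants G := hq.elim (fun h => ⟨_, h⟩) (fun h => ⟨_, h⟩)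
    refine extra q (fun h => hy (h ▸ hqp)) (fun hyq => ?_) ?_
    · rcases hq with hq | hq
      · exact hay ((hq y).1 hyq.symm).symm
      · exact hby ((hq y).1 hyq.symm).symm
    · exact hq.imp (fun h => ⟨h.adj.symm, fun h => hb (h ▸ hqp)⟩)
        (fun h => ⟨h.adj.symm, fun h => ha (h ▸ hqp)⟩)
  by_cases hfree : ∃ q, IsPendantAt G q a ∨ IsPendantAt G q b
  · obtain ⟨q, hq⟩ := hfree
    exact Or.inl (extra' q hq)
  push Not at hfree
  obtain ⟨c, hc, hcb, hac, hNa⟩ := h.exists_next ha hb hba.symm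
  have hcy : c ≠ y := fun h => hya (h ▸ hac.symm)
  by_cases hyc : G.Adj y c
  swap
  · exact Or.inl (extra c hcy hyc (Or.inl ⟨hac, hcb⟩))
  have hxc : ¬ G.Adj x c := fun h => (hNx' c h).elim hcy hcb
  have hcx : c ≠ x := fun h => hxa (h ▸ hac.symm)
  have hNy : ∀ t, G.Adj y t → t = x ∨ t = c ∨ t = p := fun t ht => by
    have h1 := h.eq_or_eq_or_isPendantAt hy hx hc hyx hyc hcx.symm ht
    have h2 := h.pendant_unique t p y
    tauto
  by_cases hd : ∃ d, IsPendantAt G d c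
  · left
    obtain ⟨d, hd⟩ := hd
    have hdp : d ∈ pendants G := ⟨c, hd⟩
    have hda : a ≠ d := fun h => ha (h ▸ hdp)
    obtain ⟨S, hS, hTS⟩ := (isDissoc_pair_union_pair (G := G) (p := p) (y := x) (a := a) (q := d)
      (fun h => hay ((hp a).1 h)) (fun h => hy ((hp d).1 h ▸ hdp)) hxa
      (fun h => hcx ((hd x).1 h.symm).symm)).exists_isMaxDissoc
    have hpS : p ∈ S := hTS (by simp)
    have hxS : x ∈ S := hTS (by simp)
    have haS : a ∈ S := hTS (by simp)
    have hdS : d ∈ S := hTS (by simp)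
    have hyS : y ∉ S := fun hyS => not_isDissoc hyS hxS hpS hxp hyx hp.adj.symm hS.1
    have hbS : b ∉ S := fun hbS => not_isDissoc hbS hxS haS hax.symm hxb.symm hba hS.1
    have hcS : c ∉ S := fun hcS => not_isDissoc hcS haS hdS hda hac.symm hd.adj.symm hS.1
    refine ⟨S, hS, y, hyS, hp.adj.ne', isDissoc_insert_diff (s := x) hS.1 ?_ ?_⟩
    · rintro t ⟨htS, htp⟩ hyt
      rcases hNy t hyt with h | rfl | h
      exacts [h, absurd htS hcS, absurd h htp]
    · rintro t ⟨htS, -⟩ hxt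
      rcases hNx' t hxt with rfl | rfl
      exacts [hyS htS, hbS htS]
  · right; right
    push Not at hd
    have hbc : ¬ G.Adj b c := fun hbc => by
      rcases hNb c hbc with h | h | h
      exacts [hcx h, hac.ne' h, hc ⟨_, h⟩]
    have hNc := fun t => h.eq_or_eq_or_isPendantAt hc ha hy hac.symm hyc.symm hay (t := t)
    have hD : ∀ t ∉ pendants G, t ∈ ({y, x, b, a, c} : Finset V) := fun t ht => by
      have := mem_of_closed hconn (D := {y, x, b, a, c}) (Or.inl rfl) (fun v hv t hvt => by
        simp only [Set.mem_insert_iff, Set.mem_singleton_iff] at hv ⊢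
        rcases hv with rfl | rfl | rfl | rfl | rfl
        · rcases hNy t hvt with h | h | rfl <;> tauto
        · have := hNx' t hvt
          tauto
        · have := hNb t hvt
          tauto
        · have := hNa t hvt
          tauto
        · have := hNc t hvt
          tauto) ht
      simpa using this
    have := h.card_le hD (E := {y}) fun q z hq => by
      have h1 := hD z (hq.notMem_pendants hn hconn)
      simp only [Finset.mem_insert, Finset.mem_singleton] at h1 ⊢
      rcases h1 with h1 | rfl | rfl | rfl | rfl
      exacts [h1, absurd hq (hxf q), absurd hq (hfree q).2, absurd hq (hfree q).1,
        absurd hq (hd q)]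
    have := Finset.card_le_five (a := y) (b := x) (c := b) (d := a) (e := c)
    rw [Finset.card_singleton] at *
    exact ⟨by omega, five_le_phi_of_cycle_five hyx hxb hba hac hyc.symm hyb hya hxa hxc hbc⟩

open Classical in
/-- In a cycle, an edge `v₀ v₁` extends to a maximal dissociation set whose trace on the complement
of `v₀` is not maximal, unless the cycle is short. -/
lemma exists_isExtra_of_adj [Finite V] (h : IsSpikedCycle G) (hconn : G.Connected)
    (hpen : ∀ p y, ¬ IsPendantAt G p y) {v₀ v₁ : V} (h01 : G.Adj v₀ v₁) :
    Nat.card V ≤ 3 ∨ (Nat.card V ≤ 6 ∧ 5 ≤ phi G) ∨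
      ∃ S, IsExtra G v₀ S ∧ v₀ ∈ S ∧ v₁ ∈ S := by
  have hcore : ∀ v, v ∉ pendants G := fun v ⟨y, hy⟩ => hpen v y hy
  have next : ∀ {v x}, G.Adj v x → ∃ z, z ≠ x ∧ G.Adj v z ∧ ∀ t, G.Adj v t → t = x ∨ t = z :=
    fun {v x} hvx => by
      obtain ⟨z, -, hzx, hvz, hz⟩ := h.exists_next (hcore v) (hcore x) hvx
      refine ⟨z, hzx, hvz, fun t ht => ?_⟩
      have := hz t ht
      have := hpen t v
      tauto
  have nbrs : ∀ {v x y t}, G.Adj v x → G.Adj v y → x ≠ y → G.Adj v t → t = x ∨ t = y :=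
    fun {v x y t} hvx hvy hxy ht => by
      have := h.eq_or_eq_or_isPendantAt (hcore v) (hcore x) (hcore y) hvx hvy hxy ht
      have := hpen t v
      tauto
  have card : ∀ D : Finset V, v₀ ∈ D → (∀ v ∈ D, ∀ t, G.Adj v t → t ∈ D) →
      Nat.card V ≤ D.card := fun D h0 hD => by
    have := h.card_le (D := D) (E := ∅) (fun x _ => by
      simpa using mem_of_connected hconn (A := (D : Set V)) h0 (by simpa using hD) x)
      (fun p y hp => absurd hp (hpen p y))
    simpa using this
  obtain ⟨v₂, n20, h12, N1⟩ := next h01.symm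
  by_cases h02 : G.Adj v₀ v₂
  · left
    refine (card {v₀, v₁, v₂} (by simp) fun v hv t hvt => ?_).trans Finset.card_le_three
    simp only [Finset.mem_insert, Finset.mem_singleton] at hv ⊢
    rcases hv with rfl | rfl | rfl
    · have := nbrs h01 h02 h12.ne hvt
      tauto
    · have := N1 t hvt
      tauto
    · have := nbrs h02.symm h12.symm h01.ne hvt
      tauto
  obtain ⟨v₃, n31, h23, N2⟩ := next h12.symm
  have n30 : v₃ ≠ v₀ := fun h => h02 (h ▸ h23.symm)
  have n13 : ¬ G.Adj v₁ v₃ := fun h => (N1 _ h).elim n30 h23.ne'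
  by_cases h03 : G.Adj v₀ v₃
  · right; left
    have : Nat.card V ≤ 4 := by
      refine (card {v₀, v₁, v₂, v₃} (by simp) fun v hv t hvt => ?_).trans Finset.card_le_four
      simp only [Finset.mem_insert, Finset.mem_singleton] at hv ⊢
      rcases hv with rfl | rfl | rfl | rfl
      · have := nbrs h01 h03 n31.symm hvt
        tauto
      · have := N1 t hvt
        tauto
      · have := N2 t hvt
        tauto
      · have := nbrs h03.symm h23.symm n20.symm hvt
        tauto
    have := six_le_phi_of_cycle n20.symm n31.symm h01 h12 h23 h03.symm h02 n13
    omega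
  obtain ⟨v₄, n42, h34, N3⟩ := next h23.symm
  have n40 : v₄ ≠ v₀ := fun h => h03 (h ▸ h34.symm)
  have n14 : ¬ G.Adj v₁ v₄ := fun h => (N1 _ h).elim n40 n42
  have n41 : v₄ ≠ v₁ := fun h => n13 (h ▸ h34.symm)
  have n24 : ¬ G.Adj v₂ v₄ := fun h => (N2 _ h).elim n41 h34.ne'
  by_cases h04 : G.Adj v₀ v₄
  · right; left
    have : Nat.card V ≤ 5 := by
      refine (card {v₀, v₁, v₂, v₃, v₄} (by simp) fun v hv t hvt => ?_).trans Finset.card_le_five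
      simp only [Finset.mem_insert, Finset.mem_singleton] at hv ⊢
      rcases hv with rfl | rfl | rfl | rfl | rfl
      · have := nbrs h01 h04 n41.symm hvt
        tauto
      · have := N1 t hvt
        tauto
      · have := N2 t hvt
        tauto
      · have := N3 t hvt
        tauto
      · have := nbrs h04.symm h34.symm n30.symm hvt
        tauto
    have := five_le_phi_of_cycle_five h01 h12 h23 h34 h04.symm h02 h03 n13 n14 n24
    omega
  obtain ⟨v₅, n53, h45, N4⟩ := next h34.symm
  have n50 : v₅ ≠ v₀ := fun h => h04 (h ▸ h45.symm)
  have n52 : v₅ ≠ v₂ := fun h => n24 (h ▸ h45.symm)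
  have n51 : v₅ ≠ v₁ := fun h => n14 (h ▸ h45.symm)
  have n15 : ¬ G.Adj v₁ v₅ := fun h => (N1 _ h).elim n50 n52
  have n25 : ¬ G.Adj v₂ v₅ := fun h => (N2 _ h).elim n51 n53
  have n35 : ¬ G.Adj v₃ v₅ := fun h => (N3 _ h).elim n52 h45.ne'
  by_cases h05 : G.Adj v₀ v₅
  · right; left
    have : Nat.card V ≤ 6 := by
      refine (card {v₀, v₁, v₂, v₃, v₄, v₅} (by simp) fun v hv t hvt => ?_).trans
        Finset.card_le_six
      simp only [Finset.mem_insert, Finset.mem_singleton] at hv ⊢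
      rcases hv with rfl | rfl | rfl | rfl | rfl | rfl
      · have := nbrs h01 h05 n51.symm hvt
        tauto
      · have := N1 t hvt
        tauto
      · have := N2 t hvt
        tauto
      · have := N3 t hvt
        tauto
      · have := N4 t hvt
        tauto
      · have := nbrs h05.symm h45.symm n40.symm hvt
        tauto
    exact ⟨this, five_le_phi_of_cycle_six n30.symm n41.symm n52.symm h01 h12 h23 h34 h45 h05.symm
      h02 h03 h04 n13 n14 n15 n24 n25 n35⟩
  · right; right
    obtain ⟨S, hS, hTS⟩ := exists_isExtra (p := v₀) (y := v₁) (x := v₂)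
      (isDissoc_pair_union_pair h04 h05 n14 n15) (by simp) (by simp) h01.symm h12 n20
      fun z hz hz1 => by
        obtain rfl := (N2 z hz).resolve_left hz1
        exact not_isDissoc (v := v₄) (x := z) (y := v₅) (by simp) (by simp) (by simp) n53.symm
          h34.symm h45
    exact ⟨S, hS, hTS (by simp), hTS (by simp)⟩

end IsSpikedCycle

end SpikedCycles

section UnicyclicBound

universe u

variable {V : Type u} {G : SimpleGraph V}

/-- If every vertex on the cycle has a pendant neighbour, the order is even. -/
lemma IsSpikedCycle.even_card [Finite V] (h : IsSpikedCycle G) (hn : 3 ≤ Nat.card V)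
    (hconn : G.Connected) (hfull : ∀ v ∉ pendants G, ∃ p, IsPendantAt G p v) :
    Even (Nat.card V) := by
  have hex : ∀ p ∈ pendants G, ∃ y, IsPendantAt G p y := fun p hp => hp
  choose! f hf using hex
  have hinj : Set.InjOn f (pendants G) := fun p hp q hq hpq =>
    h.pendant_unique p q _ (hf p hp) (hpq ▸ hf q hq)
  have himg : f '' pendants G = (pendants G)ᶜ := by
    ext v
    constructor
    · rintro ⟨p, hp, rfl⟩
      exact (hf p hp).notMem_pendants hn hconn
    · intro hv
      obtain ⟨p, hp⟩ := hfull v hv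
      exact ⟨p, ⟨v, hp⟩, ((hp _).1 (hf p ⟨v, hp⟩).adj)⟩
  have h1 := hinj.ncard_image
  have h2 := Set.ncard_add_ncard_compl (pendants G)
  rw [himg] at h1
  exact ⟨(pendants G).ncard, by omega⟩

lemma IsSpikedCycle.not_isMatchedOff_induce [Finite V] (h : IsSpikedCycle G)
    (hn : 3 ≤ Nat.card V) (hconn : G.Connected)
    (hfull : ∀ v ∉ pendants G, ∃ p, IsPendantAt G p v) {p y : V} (hp : IsPendantAt G p y)
    (c : ({p}ᶜ : Set V)) : ¬ IsMatchedOff (G.induce {p}ᶜ) c := by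
  intro hc
  have hpp : p ∈ pendants G := ⟨y, hp⟩
  have key : ∀ z ∉ pendants G, z ≠ y → z = c := by
    intro z hz hzy
    by_contra hzc
    have hzp : z ≠ p := fun h => hz (h ▸ hpp)
    obtain ⟨q, hq⟩ := hfull z hz
    obtain ⟨a, b, hab, hN⟩ := h.core_regular z hz
    obtain ⟨hza, ha⟩ := (hN a).2 (Or.inl rfl)
    obtain ⟨hzb, hb⟩ := (hN b).2 (Or.inr rfl)
    have hqp : q ≠ p := fun h => hzy ((hp z).1 (h ▸ hq.adj))
    have hap : a ≠ p := fun h => ha (h ▸ hpp)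
    have hbp : b ≠ p := fun h => hb (h ▸ hpp)
    have hqa : q ≠ a := fun h => ha (h ▸ ⟨z, hq⟩)
    have hqb : q ≠ b := fun h => hb (h ▸ ⟨z, hq⟩)
    obtain ⟨t, -, ht⟩ := hc ⟨z, hzp⟩ (fun h => hzc (congrArg Subtype.val h))
    have ht' : ∀ s, s ≠ p → s ≠ c → G.Adj z s → s = t := fun s hs hsc hzs =>
      congrArg Subtype.val (ht ⟨s, hs⟩ ⟨fun h => hsc (congrArg Subtype.val h), hzs⟩)
    have h1 := ht' q hqp
    have h2 := ht' a hap
    have h3 := ht' b hbp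
    by_cases hqc : q = c
    · exact hab ((h2 (fun h => hqa (hqc.trans h.symm)) hza).trans
        (h3 (fun h => hqb (hqc.trans h.symm)) hzb).symm)
    · by_cases hac : a = c
      · exact hqb ((h1 hqc hq.adj.symm).trans (h3 (fun h => hab (hac.trans h.symm)) hzb).symm)
      · exact hqa ((h1 hqc hq.adj.symm).trans (h2 hac hza).symm)
  obtain ⟨a, b, hab, hN⟩ := h.core_regular y (hp.notMem_pendants hn hconn)
  obtain ⟨hya, ha⟩ := (hN a).2 (Or.inl rfl)
  obtain ⟨hyb, hb⟩ := (hN b).2 (Or.inr rfl)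
  exact hab ((key a ha hya.ne').trans (key b hb hyb.ne').symm)

lemma IsSpikedCycle.satisfiesBound_of_no_pendant [Finite V] (h : IsSpikedCycle G)
    (hn : 3 ≤ Nat.card V) (hconn : G.Connected) (hE : G.edgeSet.ncard = Nat.card V)
    (hpen : ∀ p y, ¬ IsPendantAt G p y) : SatisfiesBound G := by
  classical
  have := Fintype.ofFinite V
  have hcore : ∀ v, v ∉ pendants G := fun v ⟨y, hy⟩ => hpen v y hy
  have : Nontrivial V := Finite.one_lt_card_iff_nontrivial.1 (by omega)
  obtain ⟨v₀, hv₀⟩ := hconn.exists_connected_induce_compl_singleton_of_finite_nontrivial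
  obtain ⟨a, b, hab, hN⟩ := h.core_regular v₀ (hcore v₀)
  have ha := ((hN a).2 (Or.inl rfl)).1
  have hb := ((hN b).2 (Or.inr rfl)).1
  have small : Nat.card V ≤ 3 ∨ (Nat.card V ≤ 6 ∧ 5 ≤ phi G) → SatisfiesBound G := by
    rintro (h3 | ⟨h6, h5⟩)
    · have h3 : Nat.card V = 3 := by omega
      have := three_le_phi h3 hconn
      exact ⟨by omega, fun _ _ => ⟨v₀, isMatchedOff_of_card_eq_three hE h3 v₀⟩⟩
    · rcases Nat.even_or_odd (Nat.card V) with he | ho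
      · exact .of_even he (by omega)
      · rw [Nat.odd_iff] at ho
        exact .of_lt (by omega)
  rcases h.exists_isExtra_of_adj hconn hpen ha with h3 | h6 | ⟨S, hS, h0S, haS⟩
  · exact small (Or.inl h3)
  · exact small (Or.inr h6)
  rcases h.exists_isExtra_of_adj hconn hpen hb with h3 | h6 | ⟨T, hT, h0T, hbT⟩
  · exact small (Or.inl h3)
  · exact small (Or.inr h6)
  by_cases h4 : Nat.card V = 3
  · exact small (Or.inl h4.le)
  have hST : S ≠ T := by
    rintro rfl
    exact not_isDissoc h0S haS hbT hab ha hb hS.1.1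
  have h1 := phi_induce_add_ncard_le (G := G) v₀ {S, T} (by rintro R (rfl | rfl) <;> assumption)
  rw [Set.ncard_pair hST] at h1
  have hdeg : G.degree v₀ = 2 := by
    rw [← card_neighborFinset_eq_degree]
    refine Finset.card_eq_two.2 ⟨a, b, hab, ?_⟩
    ext z
    simp [← hN z, hcore z]
  have hk := card_compl_singleton_add_one v₀
  have he := ncard_edgeSet_induce_compl_singleton (G := G) v₀
  rw [hdeg] at he
  have h2 := le_phi_of_tree (by omega) hv₀ (by omega)
  exact .of_lt (by omega)

theorem satisfiesBound_of_unicyclic [Finite V] (hconn : G.Connected)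
    (hE : G.edgeSet.ncard = Nat.card V) : SatisfiesBound G := by
  obtain ⟨n, hcard⟩ : ∃ n, Nat.card V = n := ⟨_, rfl⟩
  induction n using Nat.strong_induction_on generalizing V with
  | _ n ih =>
    have hn := three_le_card_of_edges_eq hconn hE
    have hleaf : ∀ p y, IsPendantAt G p y → SatisfiesBound (G.induce {p}ᶜ) := fun p y hp => by
      obtain ⟨hc, he⟩ := connected_induce_compl_of_isPendantAt hconn hp
      have hk := card_compl_singleton_add_one p
      exact ih (n - 1) (by omega) hc (by omega) (by omega)
    rcases exists_reduction_of_edges_eq hn hconn hE with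
      ⟨p, q, y, hpq, hp, hq⟩ | ⟨u, v, w, huw, hu, hv⟩ | ⟨huniq, hcore⟩
    · obtain ⟨S, hS⟩ := exists_isExtra_of_twins hpq hp hq
      exact (hleaf p y hp).of_isExtra hS
    · obtain ⟨W, H, f, w', rfl, huf, hvf, hsurj, hc, hk, he⟩ :=
        exists_pendant_path_deletion hconn huw hu hv
      have : Finite W := Finite.of_injective f f.injective
      obtain ⟨h1, h2⟩ := ih (n - 2) (by omega) hc (by omega) (by omega)
      exact .of_pendant_path f huf hvf hsurj hu hv (by omega) hk h1 h2
        (three_le_card_of_edges_eq hc (by omega))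
    have h : IsSpikedCycle G := ⟨huniq, hcore⟩
    by_cases hpen : ∀ p y, ¬ IsPendantAt G p y
    · exact h.satisfiesBound_of_no_pendant hn hconn hE hpen
    push Not at hpen
    obtain ⟨p₀, y₀, hp₀⟩ := hpen
    by_cases hfull : ∀ v ∉ pendants G, ∃ p, IsPendantAt G p v
    · have heven := h.even_card hn hconn hfull
      obtain ⟨h1, h2⟩ := hleaf p₀ y₀ hp₀
      have hk := card_compl_singleton_add_one p₀
      have hle := phi_le_of_embedding (Embedding.induce (G := G) {p₀}ᶜ)
      refine .of_even heven ?_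
      by_contra hlt
      rw [Nat.even_iff] at heven
      obtain ⟨c, hc⟩ := h2 (by rw [Nat.odd_iff]; omega) (by omega)
      exact h.not_isMatchedOff_induce hn hconn hfull hp₀ c hc
    · push Not at hfull
      obtain ⟨x₀, hx₀, hx₀f⟩ := hfull
      obtain ⟨p, y, x, hp, hyx, hx, hxf⟩ : ∃ p y x, IsPendantAt G p y ∧ G.Adj y x ∧
          x ∉ pendants G ∧ ∀ q, ¬ IsPendantAt G q x := by
        by_contra! hno
        have := mem_of_connected hconn (A := pendants G ∪ {y | ∃ p, IsPendantAt G p y})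
          (Or.inl ⟨y₀, hp₀⟩) (by
            rintro v (⟨y, hv⟩ | ⟨p, hp⟩) t ht
            · obtain rfl := (hv t).1 ht
              exact Or.inr ⟨v, hv⟩
            · by_cases htp : t ∈ pendants G
              · exact Or.inl htp
              · exact Or.inr (hno p v t hp ht htp)) x₀
        rcases this with h | ⟨p, hp⟩
        · exact hx₀ h
        · exact hx₀f p hp
      rcases h.exists_isExtra_of_pendant hn hconn hp hyx hx hxf with ⟨S, hS⟩ | h8 | h6
      · exact (hleaf p y hp).of_isExtra hS
      · rcases Nat.even_or_odd (Nat.card V) with he | ho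
        · exact .of_even he (by omega)
        · rw [Nat.odd_iff] at ho
          exact .of_lt (by omega)
      · rcases Nat.even_or_odd (Nat.card V) with he | ho
        · exact .of_even he (by omega)
        · rw [Nat.odd_iff] at ho
          exact .of_lt (by omega)

end UnicyclicBound

section Extremal

variable {V : Type*} {G : SimpleGraph V}

/-- A matched-off vertex lying in a triangle bounds the number of maximal dissociation sets: one
avoids `c`, the others are determined by their unique neighbour of `c`. -/
lemma IsMatchedOff.phi_le [Finite V] {c a b : V} (hc : IsMatchedOff G c) (hca : G.Adj c a)
    (hcb : G.Adj c b) (hab : G.Adj a b) : phi G ≤ (G.neighborSet c).ncard + 1 := by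
  have uniq : ∀ {v x y}, v ≠ c → x ≠ c → y ≠ c → G.Adj v x → G.Adj v y → x = y :=
    fun hv hx hy hvx hvy => (hc _ hv).unique ⟨hx, hvx⟩ ⟨hy, hvy⟩
  set g : V → Set V := fun y => {v | v = c ∨ v = y ∨ ¬ G.Adj c v ∧ ¬ G.Adj y v} with hg
  have hsub : {S | IsMaxDissoc G S} ⊆ insert {c}ᶜ (g '' G.neighborSet c) := by
    intro S hS
    by_cases hcS : c ∈ S
    swap
    · refine Or.inl (hS.2 _ ?_ fun v hv h => hcS (h ▸ hv))
      exact fun v hv x hx y hy => uniq hv hx.1 hy.1 hx.2 hy.2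
    right
    by_cases hy : ∃ y ∈ S, G.Adj c y
    · obtain ⟨y, hyS, hcy⟩ := hy
      refine ⟨y, hcy, (hS.2 (g y) ?_ ?_).symm⟩
      · rintro v hv x ⟨hx, hvx⟩ z ⟨hz, hvz⟩
        have key : ∀ {x}, x ∈ g y → v = c → G.Adj v x → x = y := by
          rintro x (rfl | rfl | hx) rfl hvx
          exacts [absurd hvx G.irrefl, rfl, absurd hvx hx.1]
        have key2 : ∀ {x}, x ∈ g y → v = y → G.Adj v x → x = c := by
          rintro x (rfl | rfl | hx) rfl hvx
          exacts [rfl, absurd hvx G.irrefl, absurd hvx hx.2]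
        by_cases h1 : v = c
        · rw [key hx h1 hvx, key hz h1 hvz]
        by_cases h2 : v = y
        · rw [key2 hx h2 hvx, key2 hz h2 hvz]
        have h3 := (hv.resolve_left h1).resolve_left h2
        exact uniq h1 (fun h => h3.1 (h ▸ hvx.symm)) (fun h => h3.1 (h ▸ hvz.symm)) hvx hvz
      · intro v hv
        by_cases h1 : v = c
        · exact Or.inl h1
        by_cases h2 : v = y
        · exact Or.inr (Or.inl h2)
        · exact Or.inr (Or.inr ⟨fun h => not_isDissoc hcS hv hyS h2 h hcy hS.1,
            fun h => not_isDissoc hyS hv hcS h1 h hcy.symm hS.1⟩)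
    · push Not at hy
      have haS : a ∉ S := fun h => hy a h hca
      have hbS : b ∉ S := fun h => hy b h hcb
      refine absurd (hS.2 (insert a S) ?_ (Set.subset_insert a S) ▸ Set.mem_insert a S) haS
      have ha : ∀ x ∈ insert a S, G.Adj a x → x = c := by
        rintro x (rfl | hx) hax
        · exact absurd hax G.irrefl
        · by_contra hxc
          exact hbS (uniq hca.ne' hxc hcb.ne' hax hab ▸ hx)
      have hc' : ∀ x ∈ insert a S, G.Adj c x → x = a := by
        rintro x (rfl | hx) hcx
        exacts [rfl, absurd hcx (hy x hx)]
      rintro v hv x ⟨hx, hvx⟩ z ⟨hz, hvz⟩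
      by_cases h1 : v = c
      · subst h1
        rw [hc' x hx hvx, hc' z hz hvz]
      by_cases h2 : v = a
      · subst h2
        rw [ha x hx hvx, ha z hz hvz]
      have hvS : v ∈ S := hv.resolve_left h2
      have hxc : ∀ {x}, G.Adj v x → x ≠ c := fun hvx h => hy v hvS (h ▸ hvx).symm
      exact uniq h1 (hxc hvx) (hxc hvz) hvx hvz
  calc phi G ≤ (insert {c}ᶜ (g '' G.neighborSet c)).ncard :=
        Set.ncard_le_ncard hsub (Set.toFinite _)
    _ ≤ (g '' G.neighborSet c).ncard + 1 := Set.ncard_insert_le _ _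
    _ ≤ (G.neighborSet c).ncard + 1 := by
        gcongr
        exact Set.ncard_image_le (Set.toFinite _)

lemma IsMatchedOff.of_iso {W : Type*} {H : SimpleGraph W} (e : H ≃g G) {c : W}
    (hc : IsMatchedOff H c) : IsMatchedOff G (e c) := by
  intro v hv
  obtain ⟨u, ⟨huc, hvu⟩, huniq⟩ := hc (e.symm v) (fun h => hv (by simp [← h]))
  refine ⟨e u, ⟨fun h => huc (e.injective h), ?_⟩, ?_⟩
  · rwa [← e.map_adj_iff, e.apply_symm_apply] at hvu
  · rintro x ⟨hxc, hvx⟩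
    have := huniq (e.symm x) ⟨fun h => hxc (by simp [← h]), by rwa [e.symm.map_adj_iff]⟩
    simp [← this]

/-- The partner of a vertex of `graphU k k` in the matching outside of the centre. -/
def graphUPartner (k : ℕ) : Fin 2 ⊕ Fin k ⊕ Fin k → Fin 2 ⊕ Fin k ⊕ Fin k
  | .inl i => .inl i.rev
  | .inr (.inl i) => .inr (.inr i)
  | .inr (.inr i) => .inr (.inl i)

lemma graphU_adj_inr {k : ℕ} (x y : Fin 2 ⊕ Fin k ⊕ Fin k) :
    (graphU k k le_rfl).Adj (.inr x) (.inr y) ↔ y = graphUPartner k x := by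
  rcases x with x | x | x <;> rcases y with y | y | y <;>
    simp [graphU, graphUPartner, fromRel_adj, eq_comm]
  fin_cases x <;> fin_cases y <;> simp

lemma graphU_adj_inl {k : ℕ} (x : Fin 2 ⊕ Fin k ⊕ Fin k) :
    (graphU k k le_rfl).Adj (.inl ()) (.inr x) ↔ ∀ l, x ≠ .inr (.inr l) := by
  rcases x with x | x | x <;> simp [graphU, fromRel_adj]
  fin_cases x <;> simp

lemma isMatchedOff_graphU (k : ℕ) : IsMatchedOff (graphU k k le_rfl) (.inl ()) := by
  rintro (_ | x) hx
  · exact absurd rfl hx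
  refine ⟨.inr (graphUPartner k x), ⟨by simp, (graphU_adj_inr _ _).2 rfl⟩, ?_⟩
  rintro (_ | y) ⟨hy, hxy⟩
  · exact absurd rfl hy
  · rw [(graphU_adj_inr _ _).1 hxy]

open Classical in
/-- The neighbours of a matched-off vertex of a unicyclic graph: all but two of them are matched to
non-neighbours. -/
lemma IsMatchedOff.exists_partner [Fintype V] {c : V} (hc : IsMatchedOff G c)
    (hconn : G.Connected) (hE : G.edgeSet.ncard = Nat.card V) :
    ∃ π : V → V, (∀ v, v ≠ c → π v ≠ c ∧ G.Adj v (π v) ∧ ∀ u, u ≠ c → G.Adj v u → u = π v) ∧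
      {v ∈ G.neighborFinset c | G.Adj c (π v)}.card = 2 := by
  have hex : ∀ v, v ≠ c → ∃ u, u ≠ c ∧ G.Adj v u ∧ ∀ u', u' ≠ c → G.Adj v u' → u' = u :=
    fun v hv => by
      obtain ⟨u, ⟨h1, h2⟩, h3⟩ := hc v hv
      exact ⟨u, h1, h2, fun u' h h' => h3 u' ⟨h, h'⟩⟩
  choose! π hπ using hex
  have hinv : ∀ v, v ≠ c → π (π v) = v := fun v hv =>
    ((hπ _ (hπ v hv).1).2.2 v hv (hπ v hv).2.1.symm).symm
  refine ⟨π, hπ, ?_⟩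
  set N := G.neighborFinset c
  have hN : ∀ v ∈ N, v ≠ c := fun v hv => ((mem_neighborFinset _ _ _).1 hv).ne'
  have hunion : N ∪ N.image π = Finset.univ.erase c := by
    ext v
    simp only [Finset.mem_union, Finset.mem_image, Finset.mem_erase, Finset.mem_univ, and_true]
    constructor
    · rintro (hv | ⟨u, hu, rfl⟩)
      exacts [hN v hv, (hπ u (hN u hu)).1]
    · intro hv
      by_contra! hno
      have := mem_of_connected hconn (A := {v, π v}) (Or.inl rfl) (by
        rintro x (rfl | rfl) y hxy
        · refine Or.inr ((hπ x hv).2.2 y (fun h => ?_) hxy)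
          exact hno.1 ((mem_neighborFinset _ _ _).2 (h ▸ hxy.symm))
        · refine Or.inl (((hπ _ (hπ v hv).1).2.2 y (fun h => ?_) hxy).trans (hinv v hv))
          exact hno.2 (π v) ((mem_neighborFinset _ _ _).2 (h ▸ hxy.symm)) (hinv v hv)) c
      rcases this with h | h
      exacts [hv h.symm, (hπ v hv).1 h.symm]
  have hinter : N ∩ N.image π = {v ∈ N | G.Adj c (π v)} := by
    ext v
    simp only [Finset.mem_inter, Finset.mem_image, Finset.mem_filter]
    refine and_congr_right fun hv => ⟨?_, fun h => ?_⟩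
    · rintro ⟨u, hu, rfl⟩
      rw [hinv u (hN u hu)]
      exact (mem_neighborFinset _ _ _).1 hu
    · exact ⟨π v, (mem_neighborFinset _ _ _).2 h, hinv v (hN v hv)⟩
  have hcard := Finset.card_union_add_card_inter N (N.image π)
  have himg : (N.image π).card = N.card := Finset.card_image_of_injOn fun x hx y hy h => by
    rw [← hinv x (hN x hx), h, hinv y (hN y hy)]
  rw [hunion, hinter, himg, Finset.card_erase_of_mem (Finset.mem_univ c), Finset.card_univ] at hcard
  have hdeg : 2 * N.card = Fintype.card V + 1 := by
    rw [card_neighborFinset_eq_degree, hc.two_mul_degree hE, Nat.card_eq_fintype_card]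
  clear_value N
  omega

lemma IsMatchedOff.phi_le_of_unicyclic [Finite V] {c : V} (hc : IsMatchedOff G c)
    (hconn : G.Connected) (hE : G.edgeSet.ncard = Nat.card V) :
    phi G ≤ (Nat.card V + 1) / 2 + 1 := by
  classical
  have := Fintype.ofFinite V
  obtain ⟨π, hπ, hcard⟩ := hc.exists_partner hconn hE
  obtain ⟨a, ha⟩ := Finset.card_pos.1 (Nat.two_pos.trans_eq hcard.symm)
  rw [Finset.mem_filter, mem_neighborFinset] at ha
  have h1 := hc.phi_le ha.1 ha.2 (hπ a ha.1.ne').2.1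
  have h2 := hc.two_mul_degree hE
  rw [← coe_neighborFinset, Set.ncard_coe_finset, card_neighborFinset_eq_degree] at h1
  omega

theorem IsMatchedOff.nonempty_iso_graphU [Finite V] {c : V} (hc : IsMatchedOff G c)
    (hconn : G.Connected) (hE : G.edgeSet.ncard = Nat.card V) {k : ℕ}
    (hk : Nat.card V = 2 * k + 3) : Nonempty (G ≃g graphU k k le_rfl) := by
  classical
  have := Fintype.ofFinite V
  obtain ⟨π, hπ, hcard⟩ := hc.exists_partner hconn hE
  have hinv : ∀ v, v ≠ c → π (π v) = v := fun v hv =>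
    ((hπ _ (hπ v hv).1).2.2 v hv (hπ v hv).2.1.symm).symm
  have hdeg := hc.two_mul_degree hE
  rw [← card_neighborFinset_eq_degree, ← Finset.card_filter_add_card_filter_not
    (fun v => G.Adj c (π v)), hcard] at hdeg
  obtain ⟨a, ha⟩ := Finset.card_pos.1 (Nat.two_pos.trans_eq hcard.symm)
  rw [Finset.mem_filter, mem_neighborFinset] at ha
  obtain ⟨hca, hcπa⟩ := ha
  let e := Finset.equivFinOfCardEq (n := k)
    (by omega : {v ∈ G.neighborFinset c | ¬ G.Adj c (π v)}.card = k)
  let m : Fin k → V := fun i => e.symm i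
  have hm : ∀ i, G.Adj c (m i) ∧ ¬ G.Adj c (π (m i)) := fun i => by
    have := (e.symm i).2
    rwa [Finset.mem_filter, mem_neighborFinset] at this
  have hmc : ∀ i, m i ≠ c := fun i => (hm i).1.ne'
  have hminj : Function.Injective m := fun i j h => e.symm.injective (Subtype.ext h)
  let g : Fin 2 ⊕ Fin k ⊕ Fin k → V := Sum.elim ![a, π a] (Sum.elim m fun i => π (m i))
  have hgc : ∀ x, g x ≠ c := by
    rintro (i | i | i)
    · fin_cases i
      exacts [hca.ne', hcπa.ne']
    · exact hmc i
    · exact (hπ _ (hmc i)).1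
  have hgp : ∀ x, g (graphUPartner k x) = π (g x) := by
    rintro (i | i | i)
    · fin_cases i
      exacts [rfl, (hinv a hca.ne').symm]
    · rfl
    · exact (hinv _ (hmc i)).symm
  have hcg : ∀ x, G.Adj c (g x) ↔ ∀ l, x ≠ .inr (.inr l) := by
    rintro (i | i | i)
    · fin_cases i
      exacts [iff_of_true hca (by simp), iff_of_true hcπa (by simp)]
    · exact iff_of_true (hm i).1 (by simp)
    · exact iff_of_false (hm i).2 (by simp)
  have hcgp : ∀ x, G.Adj c (g (graphUPartner k x)) ↔ ∀ i, x ≠ .inr (.inl i) := by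
    intro x
    rw [hcg]
    rcases x with x | x | x <;> simp [graphUPartner]
  have hginj : Function.Injective g := by
    intro x y h
    have h1 := hcg x
    have h2 := hcgp x
    rw [h, hcg] at h1
    rw [hgp, h, ← hgp, hcgp] at h2
    rcases x with x | x | x <;> rcases y with y | y | y <;> simp at h1 h2
    · have hne := (hπ a hca.ne').2.1.ne
      fin_cases x <;> fin_cases y <;> simp_all [g]
    · rw [hminj h]
    · have h3 : π (π (m x)) = π (π (m y)) := congrArg π h
      rw [hinv _ (hmc x), hinv _ (hmc y)] at h3
      rw [hminj h3]
  let f : Unit ⊕ Fin 2 ⊕ Fin k ⊕ Fin k → V := Sum.elim (fun _ => c) g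
  have hf : Function.Bijective f := by
    rw [Fintype.bijective_iff_injective_and_card]
    refine ⟨(Function.injective_of_subsingleton _).sumElim hginj fun _ x => (hgc x).symm, ?_⟩
    rw [← Nat.card_eq_fintype_card (α := V), hk]
    simp
    omega
  refine ⟨RelIso.symm ⟨Equiv.ofBijective f hf, fun {x y} => ?_⟩⟩
  change G.Adj (f x) (f y) ↔ _
  rcases x with _ | x <;> rcases y with _ | y
  · exact iff_of_false G.irrefl (SimpleGraph.irrefl _)
  · exact (hcg y).trans (graphU_adj_inl y).symm
  · rw [G.adj_comm, SimpleGraph.adj_comm (graphU _ _ _)]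
    exact (hcg x).trans (graphU_adj_inl x).symm
  · rw [graphU_adj_inr]
    constructor
    · intro h
      exact hginj (((hπ _ (hgc x)).2.2 _ (hgc y) h).trans (hgp x).symm)
    · rintro rfl
      change G.Adj (g x) (g _)
      rw [hgp]
      exact (hπ _ (hgc x)).2.1

end Extremal

/-- for odd `n ≥ 3`, a unicyclic graph `G` of order `n` satisfies
`phi G = ⌊n/2⌋ + 2` iff `G ≅ U((n-3)/2, (n-3)/2)`. -/
theorem stmt1 {V : Type*} [Fintype V] (G : SimpleGraph V) (n : ℕ) (hn : 3 ≤ n) (hodd : Odd n)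
    (hcard : Fintype.card V = n) (hG : IsUnicyclic G) :
    phi G = n / 2 + 2 ↔ Nonempty (G ≃g graphU ((n - 3) / 2) ((n - 3) / 2) le_rfl) := by
  obtain ⟨hconn, hE⟩ := hG
  rw [← Nat.card_eq_fintype_card] at hcard hE
  subst hcard
  obtain ⟨h1, h2⟩ := satisfiesBound_of_unicyclic hconn hE
  have hmod := Nat.odd_iff.1 hodd
  constructor
  · intro h
    obtain ⟨c, hc⟩ := h2 hodd h
    exact hc.nonempty_iso_graphU hconn hE (by omega)
  · rintro ⟨e⟩
    have := ((isMatchedOff_graphU _).of_iso e.symm).phi_le_of_unicyclic hconn hE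
    omega
end
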